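/- For any integer d ≥ 2, there exists a C^∞ area-preserving and minimal diffeomorphism f: T^d → T^d which is semi-conjugate to a translation of T^d by a continuous surjective map homotopic to the identity, but which is not topologically conjugate to any translation of T^d. Moreover, f can be chosen so that its rotation vector is super-Liouvillean. -/

import Mathlib

open Filter Topology MeasureTheory

noncomputable section

/-- The plane ℝ². -/
abbrev R2 : Type := ℝ × ℝ

/-- The Euclidean norm on ℝ². -/
def enorm2 (v : R2) : ℝ := Real.sqrt (v.1 ^ 2 + v.2 ^ 2)

/-- The two-torus 𝕋² = ℝ²/ℤ². -/
abbrev T2 : Type := AddCircle (1 : ℝ) × AddCircle (1 : ℝ)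

/-- The covering projection π : ℝ² → 𝕋². -/
def pr2 (v : R2) : T2 := ((v.1 : AddCircle (1 : ℝ)), (v.2 : AddCircle (1 : ℝ)))

/-- The integer vector (v₁, v₂) regarded as a point of ℝ². -/
def intVec (v : ℤ × ℤ) : R2 := ((v.1 : ℝ), (v.2 : ℝ))

/-- The distance on 𝕋² induced by the Euclidean metric on ℝ². -/
def distT2 (x y : T2) : ℝ :=
  sInf {r | ∃ a b : R2, pr2 a = x ∧ pr2 b = y ∧ r = enorm2 (a - b)}

/-- The C⁰ distance between two maps of 𝕋². -/
def dC0 (f g : T2 → T2) : ℝ := ⨆ x : T2, distT2 (f x) (g x)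

/-- `F : ℝ² → ℝ²` is a lift of `f : 𝕋² → 𝕋²`, i.e. π ∘ F = f ∘ π. -/
def IsLift (F : R2 → R2) (f : T2 → T2) : Prop := ∀ z : R2, pr2 (F z) = f (pr2 z)

/-- `F` commutes with the deck transformations of π : ℝ² → 𝕋². -/
def Equivariant (F : R2 → R2) : Prop :=
  ∀ (z : R2) (v : ℤ × ℤ), F (z + intVec v) = F z + intVec v

/-- `f` is a homeomorphism of 𝕋² isotopic to the identity (equivalently, admitting an
equivariant lift to ℝ²). -/
def IsotopicToId (f : T2 → T2) : Prop :=
  IsHomeomorph f ∧ ∃ F : R2 → R2, IsHomeomorph F ∧ IsLift F f ∧ Equivariant F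

/-- The Misiurewicz–Ziemian rotation set of a lift `F`. -/
def rotSet (F : R2 → R2) : Set R2 :=
  {v | ∃ (z : ℕ → R2) (n : ℕ → ℕ), Tendsto n atTop atTop ∧
      Tendsto (fun i => ((n i : ℝ))⁻¹ • (F^[n i] (z i) - z i)) atTop (𝓝 v)}

/-- Bounded mean motion, with bound κ, for a lift `F` with rotation vector `ω`:
‖Fⁿ(z) − z − nω‖ ≤ κ for all z and n. -/
def BoundedMeanMotion (F : R2 → R2) (ω : R2) (κ : ℝ) : Prop :=
  ∀ (z : R2) (n : ℕ), enorm2 (F^[n] z - z - (n : ℝ) • ω) ≤ κ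

/-- The standard scalar product on ℝ². -/
def inner2 (u v : R2) : ℝ := u.1 * v.1 + u.2 * v.2

/-- v^⊥ = (−v₂, v₁)/‖v‖. -/
def perp2 (v : R2) : R2 := (-v.2 / enorm2 v, v.1 / enorm2 v)

/-- Bounded deviation parallel to `v`, with bound κ, for a lift `F` with rotation vector `ω`:
|⟨Fⁿ(z) − z − nω, v^⊥⟩| ≤ κ for all z and n. -/
def BoundedDeviation (F : R2 → R2) (ω : R2) (v : R2) (κ : ℝ) : Prop :=
  ∀ (z : R2) (n : ℕ), |inner2 (F^[n] z - z - (n : ℝ) • ω) (perp2 v)| ≤ κ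

/-- ‖ω‖_{𝕋²} = min over integer vectors z of ‖ω − z‖. -/
def normT2 (ω : R2) : ℝ := ⨅ v : ℤ × ℤ, enorm2 (ω - intVec v)

/-- The super-Liouvillean condition: liminf_{n→∞} n⁻¹ ln ‖nω‖_{𝕋²} = −∞. -/
def SuperLiouville (ω : R2) : Prop :=
  ∀ M : ℝ, ∃ᶠ n : ℕ in atTop, (n : ℝ)⁻¹ * Real.log (normT2 ((n : ℝ) • ω)) < M

/-- The strong super-Liouvillean condition: liminf_{n→∞} n⁻¹ aⁿ ln ‖nω‖_{𝕋²} = −∞. -/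
def StrongSuperLiouville (a : ℝ) (ω : R2) : Prop :=
  ∀ M : ℝ, ∃ᶠ n : ℕ in atTop, (n : ℝ)⁻¹ * a ^ n * Real.log (normT2 ((n : ℝ) • ω)) < M

/-- ω ∈ ℝ² is irrational if ω ∉ ℚ². -/
def IrrationalVec (ω : R2) : Prop := ¬ ∃ q : ℚ × ℚ, ω = ((q.1 : ℝ), (q.2 : ℝ))

/-- ω is totally irrational if ω₁, ω₂, 1 are rationally independent. -/
def TotallyIrrationalVec (ω : R2) : Prop :=
  ∀ d1 d2 e : ℤ, (d1 : ℝ) * ω.1 + (d2 : ℝ) * ω.2 + (e : ℝ) = 0 → d1 = 0 ∧ d2 = 0 ∧ e = 0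

/-- ω is semi-irrational: irrational but not totally irrational. -/
def SemiIrrationalVec (ω : R2) : Prop := IrrationalVec ω ∧ ¬ TotallyIrrationalVec ω

/-- `v` is a character vector of the semi-irrational vector ω. -/
def IsCharacterVector (ω : R2) (v : R2) : Prop :=
  ∃ c d : ℤ, Int.gcd c d = 1 ∧ (∃ e : ℚ, (c : ℝ) * ω.1 + (d : ℝ) * ω.2 + (e : ℝ) = 0) ∧
    v = ((d : ℝ), (-c : ℝ))

/-- `f` is Hölder continuous with exponent `a`. -/
def HolderMap (a : ℝ) (f : T2 → T2) : Prop :=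
  ∃ C : ℝ, ∀ x y : T2, distT2 (f x) (f y) ≤ C * distT2 x y ^ a

/-- C⁰-rigidity: liminf_{n→∞} d_{C⁰}(fⁿ, Id) = 0. -/
def C0Rigid (f : T2 → T2) : Prop :=
  ∀ ε : ℝ, 0 < ε → ∃ᶠ n : ℕ in atTop, dC0 (f^[n]) id < ε

/-- `f` is a C^r diffeomorphism of 𝕋², expressed via a C^r lift with a C^r inverse. -/
def IsCrDiffeo (r : ℕ∞) (f : T2 → T2) : Prop :=
  ∃ F G : R2 → R2, IsLift F f ∧ Function.LeftInverse G F ∧ Function.RightInverse G F ∧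
    ContDiff ℝ r F ∧ ContDiff ℝ r G

/-- C^k-rigidity: some sequence of iterates f^{n_j}, n_j → ∞, converges to the identity in the
C^k topology, i.e. admits lifts converging to the identity uniformly together with all
derivatives of order ≤ k. -/
def CkRigid (k : ℕ∞) (f : T2 → T2) : Prop :=
  ∃ n : ℕ → ℕ, Tendsto n atTop atTop ∧
    ∃ F : ℕ → R2 → R2, (∀ j, IsLift (F j) (f^[n j])) ∧
      ∀ i : ℕ, (i : ℕ∞) ≤ k →
        Tendsto (fun j => ⨆ z : R2, ‖iteratedFDeriv ℝ i (fun w => F j w - w) z‖)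
          atTop (𝓝 0)

/-- ‖x‖_𝕋 : the distance from x ∈ ℝ to the nearest integer. -/
def dT (x : ℝ) : ℝ := |x - round x|

/-- `q` is the sequence of denominators of the best rational approximations of β. -/
def BestDenomSeq (β : ℝ) (q : ℕ → ℕ) : Prop :=
  q 0 = 1 ∧ ∀ n : ℕ,
    q n < q (n + 1) ∧
    (∀ m : ℕ, 1 ≤ m → m < q (n + 1) → dT ((q n : ℝ) * β) ≤ dT ((m : ℝ) * β)) ∧
    dT ((q n : ℝ) * β) < 1 / (q (n + 1) : ℝ)

/-- β is of non-Brjuno type: Σ_n (ln q_{n+1})/q_n = ∞. -/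
def NonBrjunoNum (β : ℝ) : Prop :=
  ∀ q : ℕ → ℕ, BestDenomSeq β q → ¬ Summable fun n => Real.log (q (n + 1) : ℝ) / (q n : ℝ)

/-- Character data of a semi-irrational vector ω: (c,d) ∈ ℤ² with gcd(c,d)=1 and
e = p/q ∈ ℚ in lowest terms with q > 0 such that c ω₁ + d ω₂ + p/q = 0. -/
def IsCharData (ω : R2) (c d p q : ℤ) : Prop :=
  Int.gcd c d = 1 ∧ Int.gcd p q = 1 ∧ 0 < q ∧
    (c : ℝ) * ω.1 + (d : ℝ) * ω.2 + (p : ℝ) / (q : ℝ) = 0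

/-- ω is of strong non-Brjuno type: its character frequency 𝓕(ω̄) is of non-Brjuno type. -/
def StrongNonBrjuno (ω : R2) : Prop :=
  ∃ c d p q a b : ℤ, IsCharData ω c d p q ∧ a * d - b * c = 1 ∧
    NonBrjunoNum (dT ((q : ℝ) * ((a : ℝ) * ω.1 + (b : ℝ) * ω.2)))

/-- The linear action of the integer matrix [[a,b],[c,d]] on ℝ². -/
def AactZ (a b c d : ℤ) (z : R2) : R2 :=
  ((a : ℝ) * z.1 + (b : ℝ) * z.2, (c : ℝ) * z.1 + (d : ℝ) * z.2)

/-- The operator norm (w.r.t. the Euclidean norm) of the matrix [[a,b],[c,d]]. -/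
def AOpNormZ (a b c d : ℤ) : ℝ :=
  sSup {r | ∃ u : R2, enorm2 u ≤ 1 ∧
    r = enorm2 ((a : ℝ) * u.1 + (b : ℝ) * u.2, (c : ℝ) * u.1 + (d : ℝ) * u.2)}

/-- Membership in the class 𝒞_{κ,ω̄}: pseudo-rotations with rotation vector ω̄ mod ℤ²
having bounded mean motion with bound κ. -/
def MemC (κ : ℝ) (w : T2) (f : T2 → T2) : Prop :=
  IsotopicToId f ∧ ∃ (F : R2 → R2) (ω : R2),
    IsLift F f ∧ rotSet F = {ω} ∧ pr2 ω = w ∧ BoundedMeanMotion F ω κ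

/-- Membership in the class 𝒟_{κ,ω̄,v}: pseudo-rotations with rotation vector ω̄ mod ℤ²
having bounded deviation parallel to v with bound κ. -/
def MemD (κ : ℝ) (w : T2) (v : R2) (f : T2 → T2) : Prop :=
  IsotopicToId f ∧ ∃ (F : R2 → R2) (ω : R2),
    IsLift F f ∧ rotSet F = {ω} ∧ pr2 ω = w ∧ BoundedDeviation F ω v κ

/-- `h : 𝕋² → 𝕋²` is homotopic to the identity (characterised by admitting an equivariant
continuous lift). -/
def HomotopicToIdMap (h : T2 → T2) : Prop :=
  ∃ H : R2 → R2, Continuous H ∧ IsLift H h ∧ Equivariant H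

/-- `f` is regularly semi-conjugate to the translation T_w : x ↦ x + w, i.e. semi-conjugate via
a continuous surjection homotopic to the identity. -/
def RegSemiConj (f : T2 → T2) (w : T2) : Prop :=
  ∃ h : T2 → T2, Continuous h ∧ Function.Surjective h ∧ HomotopicToIdMap h ∧
    ∀ x : T2, h (f x) = h x + w

/-- `f` is topologically conjugate to a translation of 𝕋². -/
def TopLinearizable (f : T2 → T2) : Prop :=
  ∃ (w : T2) (h : T2 → T2), IsHomeomorph h ∧ ∀ x : T2, h (f x) = h x + w

/-- `f` is minimal: every orbit is dense. -/
def MinimalMap (f : T2 → T2) : Prop :=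
  ∀ x : T2, Dense (Set.range fun n : ℕ => f^[n] x)

/-- The open ball in 𝕋² for the Euclidean-induced distance. -/
def ballT2 (z : T2) (r : ℝ) : Set T2 := {y | distT2 z y < r}

/-- The diameter of a subset of 𝕋² for the Euclidean-induced distance. -/
def diamT2 (S : Set T2) : ℝ := sSup {r | ∃ x ∈ S, ∃ y ∈ S, r = distT2 x y}

/-- The Euclidean diameter of a subset of ℝ². -/
def diamE (S : Set R2) : ℝ := sSup {r | ∃ x ∈ S, ∃ y ∈ S, r = enorm2 (x - y)}

/-- `F` is a bounded (measurable) fundamental domain for the ℤ²-action on ℝ². -/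
def IsBoundedFundDom (F : Set R2) : Prop :=
  MeasurableSet F ∧ Bornology.IsBounded F ∧
    (∀ x : R2, ∃ v : ℤ × ℤ, x - intVec v ∈ F) ∧
    ∀ v : ℤ × ℤ, v ≠ 0 → F ∩ ((fun x => x + intVec v) '' F) = ∅

/-- `D` is an open topological disc in 𝕋². -/
def IsTopDisc (D : Set T2) : Prop :=
  IsOpen D ∧ Nonempty (D ≃ₜ Metric.ball (0 : R2) 1)

/-- `D` is simple with respect to the fundamental domain `F`: some connected component of
π⁻¹(D) is contained in `F`. -/
def IsSimpleDisc (D : Set T2) (F : Set R2) : Prop :=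
  ∃ x ∈ pr2 ⁻¹' D, connectedComponentIn (pr2 ⁻¹' D) x ⊆ F

/-- `u` is the rotation vector of `g`, defined as the mean displacement
∫_{𝕋²} (g̃(x̃) − x̃) dλ(x) mod ℤ² of an equivariant lift `G` of `g`. -/
def IsRotOf (g : T2 → T2) (u : T2) : Prop :=
  ∃ (G : R2 → R2) (Φ : T2 → R2), Continuous G ∧ IsLift G g ∧ Equivariant G ∧
    (∀ z : R2, Φ (pr2 z) = G z - z) ∧ u = pr2 (∫ x : T2, Φ x)

/-- The set Γ = ((ℚ×ℝ)/ℤ²) ∪ ((ℝ×ℚ)/ℤ²) of points of 𝕋² with at least one rational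
coordinate. -/
def GammaSet : Set T2 :=
  {x | (∃ q : ℚ, x.1 = ((q : ℝ) : AddCircle (1 : ℝ))) ∨
       (∃ q : ℚ, x.2 = ((q : ℝ) : AddCircle (1 : ℝ)))}

/-- The d-dimensional Euclidean space ℝ^d. -/
abbrev RD (d : ℕ) : Type := Fin d → ℝ

/-- The d-dimensional torus 𝕋^d = ℝ^d/ℤ^d. -/
abbrev TD (d : ℕ) : Type := Fin d → AddCircle (1 : ℝ)

/-- The covering projection π : ℝ^d → 𝕋^d. -/
def prD {d : ℕ} (v : RD d) : TD d := fun i => (v i : AddCircle (1 : ℝ))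

/-- An integer vector regarded as a point of ℝ^d. -/
def intVecD {d : ℕ} (v : Fin d → ℤ) : RD d := fun i => (v i : ℝ)

/-- `F : ℝ^d → ℝ^d` is a lift of `f : 𝕋^d → 𝕋^d`. -/
def IsLiftD {d : ℕ} (F : RD d → RD d) (f : TD d → TD d) : Prop :=
  ∀ z : RD d, prD (F z) = f (prD z)

/-- `F` commutes with the deck transformations. -/
def EquivariantD {d : ℕ} (F : RD d → RD d) : Prop :=
  ∀ (z : RD d) (v : Fin d → ℤ), F (z + intVecD v) = F z + intVecD v

/-- ‖ω‖_{𝕋^d} = min over integer vectors z of ‖ω − z‖. -/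
def normTD {d : ℕ} (ω : RD d) : ℝ := ⨅ v : Fin d → ℤ, ‖ω - intVecD v‖

/-- The super-Liouvillean condition in dimension d. -/
def SuperLiouvilleD {d : ℕ} (ω : RD d) : Prop :=
  ∀ M : ℝ, ∃ᶠ n : ℕ in atTop, (n : ℝ)⁻¹ * Real.log (normTD ((n : ℝ) • ω)) < M

/-!
The diffeomorphism is obtained by the Anosov–Katok method, as a limit of the conjugates of rational
translations `T_{a n}` by volume-preserving diffeomorphisms `H n`, where
`(H (n + 1))⁻¹ = A n ∘ (H n)⁻¹` and the twist `A n` commutes with `T_{a (n + 1)}`. Thus replacing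
`H n` by `H (n + 1)` does not change the conjugate of `T_{a (n + 1)}`, and only the distance from
`a n` to `a (n + 1)` matters for smooth convergence. Choosing it minute in terms of everything
constructed before also makes the limit `ω` of the `a n` super-Liouvillean.

The displacements of the twists are summable, so `(H n)⁻¹` converges uniformly to a semi-conjugacy
`P` to `T_ω`. The twists bring the points `0` and `t 0 • e_j` together in the limit, so `P` is not
injective. However, they are supported in thin strips, and almost every point avoids the strips of
all late twists, so a dense set of points are alone in their fibre of `P`. A closed set containing a
forward orbit is mapped by `P` onto the whole torus, and therefore contains this dense set, which
gives minimality. Finally, a conjugacy to a translation would provide a homeomorphism of the torus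
preserving the fibres of `P` and mapping one of the two identified points to the other; but such a
map fixes a dense set of points, hence all.
-/

section Covering

variable {d : ℕ}

lemma prD_isOpenQuotientMap : IsOpenQuotientMap (prD : RD d → TD d) :=
  IsOpenQuotientMap.piMap fun _ : Fin d =>
    ⟨QuotientAddGroup.mk_surjective, AddCircle.continuous_mk' 1, QuotientAddGroup.isOpenMap_coe⟩

lemma continuous_prD : Continuous (prD : RD d → TD d) :=
  prD_isOpenQuotientMap.continuous

lemma prD_surjective : Function.Surjective (prD : RD d → TD d) :=
  prD_isOpenQuotientMap.surjective

@[simp] lemma prD_zero : prD (0 : RD d) = 0 := rfl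

lemma prD_add (a b : RD d) : prD (a + b) = prD a + prD b := rfl

lemma prD_sub (a b : RD d) : prD (a - b) = prD a - prD b := rfl

lemma prD_nsmul (n : ℕ) (a : RD d) : prD (n • a) = n • prD a := rfl

@[simp] lemma prD_intVecD (v : Fin d → ℤ) : prD (intVecD v) = 0 := by
  ext i
  exact (AddCircle.coe_eq_zero_iff 1).2 ⟨v i, by simp [intVecD]⟩

lemma prD_eq_zero_iff {a : RD d} : prD a = 0 ↔ ∃ v, a = intVecD v := by
  refine ⟨fun h => ?_, ?_⟩
  · choose v hv using fun i => (AddCircle.coe_eq_zero_iff 1).1 (congrFun h i)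
    exact ⟨v, funext fun i => by simp [intVecD, ← hv i]⟩
  · rintro ⟨v, rfl⟩
    exact prD_intVecD v

lemma prD_eq_prD_iff {a b : RD d} : prD a = prD b ↔ ∃ v, a = b + intVecD v := by
  rw [← sub_eq_zero, ← prD_sub, prD_eq_zero_iff]
  simp only [sub_eq_iff_eq_add']

lemma prD_single (i : Fin d) (t : ℝ) :
    prD (Pi.single i t) = Pi.single i (t : AddCircle (1 : ℝ)) := by
  ext k
  rcases eq_or_ne k i with rfl | h <;> simp [prD, *]

lemma exists_add_intVecD_mem_Icc (z : RD d) : ∃ v, z + intVecD v ∈ Set.Icc (0 : RD d) 1 := by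
  refine ⟨fun i => -⌊z i⌋, fun i => ?_, fun i => ?_⟩ <;>
    simp only [Pi.add_apply, intVecD, Int.cast_neg, ← sub_eq_add_neg, Int.self_sub_floor]
  exacts [Int.fract_nonneg _, (Int.fract_lt_one _).le]

lemma norm_coe_addCircle_le (x : ℝ) : ‖(x : AddCircle (1 : ℝ))‖ ≤ |x| :=
  QuotientAddGroup.norm_mk_le_norm

lemma norm_prD_le (a : RD d) : ‖prD a‖ ≤ ‖a‖ :=
  (pi_norm_le_iff_of_nonneg (norm_nonneg _)).2 fun i =>
    (norm_coe_addCircle_le _).trans (norm_le_pi_norm a i)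

lemma normTD_eq_norm_prD (ω : RD d) : normTD ω = ‖prD ω‖ := by
  have hbdd : BddBelow (Set.range fun v : Fin d → ℤ => ‖ω - intVecD v‖) :=
    ⟨0, Set.forall_mem_range.2 fun _ => norm_nonneg _⟩
  refine le_antisymm ((ciInf_le hbdd fun i => round (ω i)).trans ?_) (le_ciInf fun v => ?_)
  · refine (pi_norm_le_iff_of_nonneg (norm_nonneg _)).2 fun i => ?_
    simpa [AddCircle.norm_eq, prD, intVecD] using norm_le_pi_norm (prD ω) i
  · simpa [prD_sub] using norm_prD_le (ω - intVecD v)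

/-- The map of the torus covered by an equivariant map `F` of Euclidean space. It is defined for
every `F` through a section of the covering, but only meaningful when `F` is equivariant. -/
def descend (F : RD d → RD d) : TD d → TD d := fun x =>
  prD (F (Function.surjInv prD_surjective x))

namespace EquivariantD

variable {F G : RD d → RD d}

lemma descend_prD (hF : EquivariantD F) (z : RD d) : descend F (prD z) = prD (F z) := by
  obtain ⟨v, hv⟩ := prD_eq_prD_iff.1 (Function.surjInv_eq prD_surjective (prD z))
  rw [descend, hv, hF, prD_add, prD_intVecD, add_zero]

lemma isLiftD_descend (hF : EquivariantD F) : IsLiftD F (descend F) :=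
  fun z => (hF.descend_prD z).symm

lemma continuous_descend (hF : EquivariantD F) (hc : Continuous F) : Continuous (descend F) := by
  rw [prD_isOpenQuotientMap.isQuotientMap.continuous_iff,
    show descend F ∘ prD = prD ∘ F from funext hF.descend_prD]
  exact continuous_prD.comp hc

lemma comp (hF : EquivariantD F) (hG : EquivariantD G) : EquivariantD (F ∘ G) := fun z v => by
  simp only [Function.comp_apply, hG z v, hF _ v]

lemma semiconj_descend (hG : EquivariantD G) (hF : EquivariantD F) {ω : RD d}
    (h : Function.Semiconj G F (· + ω)) :
    Function.Semiconj (descend G) (descend F) (· + prD ω) :=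
  prD_surjective.forall.2 fun z => by
    rw [hF.descend_prD, hG.descend_prD, h z, prD_add, hG.descend_prD]

lemma descend_comp (hF : EquivariantD F) (hG : EquivariantD G) :
    descend (F ∘ G) = descend F ∘ descend G := by
  refine funext (prD_surjective.forall.2 fun z => ?_)
  simp [(hF.comp hG).descend_prD, hF.descend_prD, hG.descend_prD]

lemma of_tendsto {ι : Type*} {l : Filter ι} [l.NeBot] {F : ι → RD d → RD d} {G : RD d → RD d}
    (hF : ∀ n, EquivariantD (F n)) (h : ∀ z, Tendsto (F · z) l (𝓝 (G z))) : EquivariantD G :=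
  fun z v => tendsto_nhds_unique (h (z + intVecD v)) <| by
    simpa only [hF _ z v] using (h z).add_const (intVecD v)

end EquivariantD

lemma descend_id : descend (id : RD d → RD d) = id :=
  funext (prD_surjective.forall.2 fun _ => EquivariantD.descend_prD (fun _ _ => rfl) _)

/-- Compactness of a fundamental domain makes convergence of a periodic family uniform. -/
lemma eventually_forall_norm_lt_of_periodic {X E : Type*} [TopologicalSpace X]
    [SeminormedAddCommGroup E] {g : X → RD d → E} (hg : Continuous (Function.uncurry g))
    (hper : ∀ x z v, g x (z + intVecD v) = g x z) {x₀ : X} (h₀ : ∀ z, g x₀ z = 0) {ε : ℝ}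
    (hε : 0 < ε) : ∀ᶠ x in 𝓝 x₀, ∀ z, ‖g x z‖ < ε := by
  have hcube : ∀ z ∈ Set.Icc (0 : RD d) 1, ∀ᶠ p in 𝓝 (x₀, z), ‖g p.1 p.2‖ < ε := fun z _ =>
    hg.norm.continuousAt.eventually_lt continuousAt_const (by simpa [h₀] using hε)
  have hunif : ∀ᶠ x in 𝓝 x₀, ∀ z ∈ Set.Icc (0 : RD d) 1, ‖g x z‖ < ε :=
    isCompact_Icc.eventually_forall_of_forall_eventually hcube
  filter_upwards [hunif] with x hx z
  obtain ⟨v, hv⟩ := exists_add_intVecD_mem_Icc z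
  simpa [hper] using hx _ hv

lemma EquivariantD.exists_norm_sub_le {F : RD d → RD d} (hF : EquivariantD F)
    (hc : Continuous F) : ∃ C, ∀ z, ‖F z - z‖ ≤ C := by
  obtain ⟨C, hC⟩ := (isCompact_Icc (a := (0 : RD d)) (b := 1)).exists_bound_of_continuousOn
    (f := fun z => F z - z) (hc.sub continuous_id).continuousOn
  refine ⟨C, fun z => ?_⟩
  obtain ⟨v, hv⟩ := exists_add_intVecD_mem_Icc z
  simpa [hF z v] using hC _ hv

end Covering

section Dynamics

open Function

variable {X G : Type*}

lemma semiconj_iterate_apply_add [AddMonoid G] {f : X → X} {h : X → G} {w : G}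
    (hsemi : Semiconj h f (· + w)) (n : ℕ) (x : X) : h (f^[n] x) = h x + n • w := by
  simpa only [add_right_iterate] using hsemi.iterate_right n x

/-- The points at which `h` is injective, i.e. whose fibre under `h` is a singleton. The interest
of this set is that a semiconjugacy to a minimal translation forces every invariant closed set to
contain it. -/
def injectivityPoints (h : X → G) : Set X := {x | ∀ y, h y = h x → y = x}

variable [TopologicalSpace X] [CompactSpace X] [TopologicalSpace G] [AddCommGroup G]
  [ContinuousAdd G] [T2Space G] {f : X → X} {h : X → G} {w : G}

lemma image_eq_univ_of_iterate_mem (hc : Continuous h) (hsemi : Semiconj h f (· + w))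
    (hw : DenseRange fun n : ℕ => n • w) {C : Set X} (hC : IsClosed C) {x : X}
    (hx : ∀ n, f^[n] x ∈ C) : h '' C = Set.univ := by
  have hdense : DenseRange fun n : ℕ => h x + n • w :=
    (Homeomorph.addLeft (h x)).surjective.denseRange.comp hw (Homeomorph.addLeft (h x)).continuous
  refine (hC.isCompact.image hc).isClosed.closure_eq ▸ (hdense.mono ?_).closure_eq
  rintro _ ⟨n, rfl⟩
  exact ⟨_, hx n, semiconj_iterate_apply_add hsemi n x⟩

lemma surjective_of_semiconj_add [Nonempty X] (hc : Continuous h) (hsemi : Semiconj h f (· + w))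
    (hw : DenseRange fun n : ℕ => n • w) : Surjective h := by
  rw [← Set.range_eq_univ, ← Set.image_univ]
  exact image_eq_univ_of_iterate_mem hc hsemi hw isClosed_univ (x := Classical.arbitrary X)
    fun _ => trivial

lemma dense_range_iterate_of_dense_injectivityPoints (hc : Continuous h)
    (hsemi : Semiconj h f (· + w)) (hw : DenseRange fun n : ℕ => n • w)
    (hinj : Dense (injectivityPoints h)) (x : X) : Dense (Set.range fun n : ℕ => f^[n] x) := by
  refine dense_closure.1 (hinj.mono fun y hy => ?_)
  have himage := image_eq_univ_of_iterate_mem hc hsemi hw isClosed_closure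
    fun n => subset_closure (Set.mem_range_self (f := fun n : ℕ => f^[n] x) n)
  obtain ⟨z, hz, hzy⟩ := himage.ge (Set.mem_univ (h y))
  exact hy z hzy ▸ hz

/-- A conjugacy `k` to a translation would make the homeomorphism
`x ↦ k⁻¹ (k x + (k b - k a))`, which maps the orbit of `a` to that of `b`, preserve the fibres
of `h`. -/
lemma not_isHomeomorph_of_semiconj_add {Y : Type*} [TopologicalSpace Y] [AddCommGroup Y]
    [ContinuousAdd Y] (hc : Continuous h) (hsemi : Semiconj h f (· + w))
    (hw : DenseRange fun n : ℕ => n • w) (hinj : Dense (injectivityPoints h)) {a b : X}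
    (hab : a ≠ b) (hhab : h a = h b) {u : Y} {k : X → Y} (hk : Semiconj k f (· + u)) :
    ¬ IsHomeomorph k := by
  intro hk'
  obtain ⟨K, rfl⟩ := isHomeomorph_iff_exists_homeomorph.1 hk'
  have horbit : (Set.range fun n : ℕ => f^[n] a) ⊆
      {x | h (K.symm (K x + (K b - K a))) = h x} := by
    rintro _ ⟨n, rfl⟩
    have hmove : K (f^[n] a) + (K b - K a) = K (f^[n] b) := by
      rw [semiconj_iterate_apply_add hk, semiconj_iterate_apply_add hk]
      abel
    rw [Set.mem_ofPred_eq, hmove, K.symm_apply_apply, semiconj_iterate_apply_add hsemi,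
      semiconj_iterate_apply_add hsemi, hhab]
  have hclosed : IsClosed {x | h (K.symm (K x + (K b - K a))) = h x} :=
    isClosed_eq (by fun_prop) hc
  have hfibre : ∀ x, h (K.symm (K x + (K b - K a))) = h x := fun x =>
    hclosed.closure_subset_iff.2 horbit
      (dense_range_iterate_of_dense_injectivityPoints hc hsemi hw hinj a x)
  have : Nonempty X := ⟨a⟩
  obtain ⟨x, hx⟩ := hinj.nonempty
  have hfix : K x + (K b - K a) = K x := K.symm_apply_eq.1 (hx _ (hfibre x))
  exact hab (K.injective (sub_eq_zero.1 (by simpa using hfix)).symm)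

lemma tendsto_inv_smul_iterate_sub {E : Type*} [NormedAddCommGroup E] [NormedSpace ℝ E]
    {F P : E → E} {ω : E} {C : ℝ} (hP : ∀ z, ‖P z - z‖ ≤ C) (hsemi : Semiconj P F (· + ω))
    (z : E) : Tendsto (fun n : ℕ => (n : ℝ)⁻¹ • (F^[n] z - z)) atTop (𝓝 ω) := by
  rw [tendsto_iff_norm_sub_tendsto_zero]
  have hzero : Tendsto (fun n : ℕ => (n : ℝ)⁻¹ * (C + C)) atTop (𝓝 0) := by
    simpa using (tendsto_inv_atTop_nhds_zero_nat (𝕜 := ℝ)).mul_const (C + C)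
  refine squeeze_zero' (.of_forall fun n => norm_nonneg _) ?_ hzero
  filter_upwards [eventually_ne_atTop 0] with n hn
  have hn' : (n : ℝ) ≠ 0 := Nat.cast_ne_zero.2 hn
  have hsplit : (n : ℝ)⁻¹ • (F^[n] z - z) - ω =
      (n : ℝ)⁻¹ • ((P z - z) - (P (F^[n] z) - F^[n] z)) := by
    rw [semiconj_iterate_apply_add hsemi, eq_inv_smul_iff₀ hn', smul_sub, smul_inv_smul₀ hn',
      Nat.cast_smul_eq_nsmul]
    abel
  rw [hsplit, norm_smul, norm_inv, Real.norm_natCast]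
  gcongr
  exact (norm_sub_le _ _).trans (add_le_add (hP z) (hP _))

end Dynamics

section MeasurePreserving

lemma measurePreserving_of_tendsto {X Y : Type*} [MeasurableSpace X] {μ : Measure X}
    [IsFiniteMeasure μ] [TopologicalSpace Y] [TopologicalSpace.PseudoMetrizableSpace Y]
    [MeasurableSpace Y] [BorelSpace Y] {ν : Measure Y} {f : ℕ → X → Y} {g : X → Y}
    (hf : ∀ n, MeasurePreserving (f n) μ ν) (hlim : ∀ x, Tendsto (f · x) atTop (𝓝 (g x))) :
    MeasurePreserving g μ ν := by
  have hg : Measurable g :=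
    measurable_of_tendsto_metrizable (fun n => (hf n).measurable) (tendsto_pi_nhds.2 hlim)
  have : IsFiniteMeasure ν := (hf 0).map_eq ▸ inferInstance
  refine ⟨hg, ext_of_forall_integral_eq_of_IsFiniteMeasure fun φ => ?_⟩
  have hint : ∀ {k : X → Y}, Measurable k → ∫ y, φ y ∂(μ.map k) = ∫ x, φ (k x) ∂μ := fun hk =>
    integral_map hk.aemeasurable (φ.continuous.measurable.stronglyMeasurable.aestronglyMeasurable)
  have htendsto : Tendsto (fun n => ∫ x, φ (f n x) ∂μ) atTop (𝓝 (∫ x, φ (g x) ∂μ)) :=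
    tendsto_integral_of_dominated_convergence (fun _ => ‖φ‖)
      (fun n => (φ.continuous.measurable.comp (hf n).measurable).aestronglyMeasurable)
      (integrable_const _) (fun n => ae_of_all _ fun x => φ.norm_coe_le_norm _)
      (ae_of_all _ fun x => (φ.continuous.tendsto _).comp (hlim x))
  rw [hint hg]
  refine tendsto_nhds_unique htendsto (tendsto_const_nhds.congr fun n => ?_)
  rw [← hint (hf n).measurable, (hf n).map_eq]

lemma measurePreserving_add_single {n : ℕ} {G : Type*} [AddGroup G] [MeasurableSpace G]
    [MeasurableAdd₂ G] {μ : Measure G} [SigmaFinite μ] [μ.IsAddRightInvariant] (i : Fin (n + 1))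
    {φ : (Fin n → G) → G} (hφ : Measurable φ) :
    MeasurePreserving (fun x => x + Pi.single i (φ (i.removeNth x)))
      (Measure.pi fun _ => μ) (Measure.pi fun _ => μ) := by
  let e := MeasurableEquiv.piFinSuccAbove (fun _ : Fin (n + 1) => G) i
  have he : MeasurePreserving e (Measure.pi fun _ => μ) (μ.prod (Measure.pi fun _ => μ)) :=
    measurePreserving_piFinSuccAbove (fun _ => μ) i
  have hskew : MeasurePreserving (fun p : (Fin n → G) × G => (p.1, p.2 + φ p.1))
      ((Measure.pi fun _ => μ).prod μ) ((Measure.pi fun _ => μ).prod μ) :=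
    (MeasurePreserving.id _).skew_product (by simp only [Function.uncurry_def]; fun_prop)
      (ae_of_all _ fun y => (measurePreserving_add_right μ (φ y)).map_eq)
  have hconj : (fun x => x + Pi.single i (φ (i.removeNth x))) =
      e.symm ∘ Prod.swap ∘ (fun p => (p.1, p.2 + φ p.1)) ∘ Prod.swap ∘ e := by
    funext x
    rw [Function.comp_apply, MeasurableEquiv.eq_symm_apply]
    ext l <;> simp [e, MeasurableEquiv.piFinSuccAbove, Fin.insertNthEquiv, Fin.removeNth]
  rw [hconj]
  exact (he.symm e).comp
    (Measure.measurePreserving_swap.comp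
      (hskew.comp (Measure.measurePreserving_swap.comp he)))

end MeasurePreserving

section SmoothLimits

variable {V W : Type*} [NormedAddCommGroup V] [NormedSpace ℝ V] [NormedAddCommGroup W]
  [NormedSpace ℝ W]

/-- `f` and `g` are `ε`-close in the uniform `C^n` norm: all derivatives of `f - g` of order at
most `n` are bounded by `ε` on the whole space. -/
def CkClose (n : ℕ) (ε : ℝ) (f g : V → W) : Prop :=
  ∀ k ≤ n, ∀ z, ‖iteratedFDeriv ℝ k (f - g) z‖ ≤ ε

lemma exists_contDiff_tendstoUniformly [CompleteSpace W] {f : ℕ → V → W}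
    (hf : ∀ n, ContDiff ℝ (⊤ : ℕ∞) (f n)) {u : ℕ → ℝ} (hu : Summable u)
    (hclose : ∀ n, CkClose n (u n) (f (n + 1)) (f n)) :
    ∃ g : V → W, ContDiff ℝ (⊤ : ℕ∞) g ∧ TendstoUniformly f g atTop := by
  refine ⟨fun z => f 0 z + ∑' n, (f (n + 1) - f n) z, (hf 0).add ?_, ?_⟩
  · refine contDiff_tsum_of_eventually (v := fun _ => u) (fun n => (hf (n + 1)).sub (hf n))
      (fun _ _ => hu) fun k _ => ?_
    rw [Nat.cofinite_eq_atTop]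
    filter_upwards [eventually_ge_atTop k] with n hn z using hclose n k hn z
  · have hzero : ∀ n z, ‖(f (n + 1) - f n) z‖ ≤ u n := fun n z => by
      simpa using hclose n 0 n.zero_le z
    have htelescope : ∀ N z, ∑ n ∈ Finset.range N, (f (n + 1) - f n) z = f N z - f 0 z :=
      fun N z => Finset.sum_range_sub (fun n => f n z) N
    have hsum := Metric.tendstoUniformly_iff.1 (tendstoUniformly_tsum_nat hu hzero)
    refine Metric.tendstoUniformly_iff.2 fun ε hε => (hsum ε hε).mono fun n hn z => ?_
    have := hn z
    rwa [← dist_add_left (f 0 z), htelescope, add_sub_cancel] at this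

lemma continuous_iteratedFDeriv_slice {X : Type*} [NormedAddCommGroup X] [NormedSpace ℝ X]
    {f : X × V → W} (hf : ContDiff ℝ (⊤ : ℕ∞) f) (k : ℕ) :
    Continuous fun p : X × V => iteratedFDeriv ℝ k (fun z => f (p.1, z)) p.2 := by
  have hslice : ∀ p : X × V, iteratedFDeriv ℝ k (fun z => f (p.1, z)) p.2 =
      (iteratedFDeriv ℝ k f p).compContinuousLinearMap fun _ => .inr ℝ X V := fun p => by
    have hcomp : (fun z => f (p.1, z)) =
        (fun q => f ((p.1, 0) + q)) ∘ ContinuousLinearMap.inr ℝ X V := by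
      funext z; simp
    have hshift : ContDiff ℝ (⊤ : ℕ∞) fun q => f ((p.1, 0) + q) :=
      hf.comp (contDiff_const.add contDiff_id)
    rw [hcomp, ContinuousLinearMap.iteratedFDeriv_comp_right _ hshift _ (i := k)
      (by exact_mod_cast le_top), iteratedFDeriv_comp_add_left]
    simp
  simp only [hslice]
  exact (map_continuous (ContinuousMultilinearMap.compContinuousLinearMapL (𝕜 := ℝ) (F := W)
    fun _ : Fin k => ContinuousLinearMap.inr ℝ X V)).comp
      (hf.continuous_iteratedFDeriv (by exact_mod_cast le_top))

end SmoothLimits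

section TorusDiffeos

open Equiv

variable {d : ℕ}

/-- Smooth volume-preserving diffeomorphisms of the torus, represented by an equivariant lift to
Euclidean space. Lifts are permutations so that the group structure of `Equiv.Perm` applies. -/
structure IsTorusDiffeo (H : Perm (RD d)) : Prop where
  contDiff : ContDiff ℝ (⊤ : ℕ∞) H
  contDiff_inv : ContDiff ℝ (⊤ : ℕ∞) ⇑H⁻¹
  equivariant : EquivariantD H
  measurePreserving : MeasurePreserving (descend H) volume volume

lemma EquivariantD.perm_inv {H : Perm (RD d)} (hH : EquivariantD H) : EquivariantD ⇑H⁻¹ :=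
  fun z v => H.injective <| by simp [hH _ v]

namespace IsTorusDiffeo

variable {A H : Perm (RD d)}

protected lemma one : IsTorusDiffeo (1 : Perm (RD d)) where
  contDiff := contDiff_id
  contDiff_inv := contDiff_id
  equivariant _ _ := rfl
  measurePreserving := by simpa [Perm.coe_one, descend_id] using MeasurePreserving.id _

protected lemma mul (hA : IsTorusDiffeo A) (hH : IsTorusDiffeo H) : IsTorusDiffeo (A * H) where
  contDiff := hA.contDiff.comp hH.contDiff
  contDiff_inv := by
    rw [mul_inv_rev]
    exact hH.contDiff_inv.comp hA.contDiff_inv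
  equivariant := hA.equivariant.comp hH.equivariant
  measurePreserving := by
    rw [Perm.coe_mul, hA.equivariant.descend_comp hH.equivariant]
    exact hA.measurePreserving.comp hH.measurePreserving

lemma continuous_descend (hH : IsTorusDiffeo H) : Continuous (descend H) :=
  hH.equivariant.continuous_descend hH.contDiff.continuous

lemma continuous_descend_inv (hH : IsTorusDiffeo H) : Continuous (descend ⇑H⁻¹) :=
  hH.equivariant.perm_inv.continuous_descend hH.contDiff_inv.continuous

lemma leftInverse_descend_inv (hH : IsTorusDiffeo H) :
    Function.LeftInverse (descend ⇑H⁻¹) (descend H) := fun x => by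
  rw [← Function.comp_apply (f := descend _),
    ← hH.equivariant.perm_inv.descend_comp hH.equivariant, ← Perm.coe_mul, inv_mul_cancel,
    Perm.coe_one, descend_id, id]

lemma rightInverse_descend_inv (hH : IsTorusDiffeo H) :
    Function.RightInverse (descend ⇑H⁻¹) (descend H) := fun x => by
  rw [← Function.comp_apply (f := descend _),
    ← hH.equivariant.descend_comp hH.equivariant.perm_inv, ← Perm.coe_mul, mul_inv_cancel,
    Perm.coe_one, descend_id, id]

lemma isHomeomorph_descend (hH : IsTorusDiffeo H) : IsHomeomorph (descend H) :=
  isHomeomorph_iff_exists_inverse.2 ⟨hH.continuous_descend, descend ⇑H⁻¹,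
    hH.leftInverse_descend_inv, hH.rightInverse_descend_inv, hH.continuous_descend_inv⟩

protected lemma inv (hH : IsTorusDiffeo H) : IsTorusDiffeo H⁻¹ where
  contDiff := hH.contDiff_inv
  contDiff_inv := by rw [inv_inv]; exact hH.contDiff
  equivariant := hH.equivariant.perm_inv
  measurePreserving := by
    let e : TD d ≃ᵐ TD d :=
      { toFun := descend H
        invFun := descend ⇑H⁻¹
        left_inv := hH.leftInverse_descend_inv
        right_inv := hH.rightInverse_descend_inv
        measurable_toFun := hH.continuous_descend.measurable
        measurable_invFun := hH.continuous_descend_inv.measurable }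
    exact MeasurePreserving.symm e hH.measurePreserving

protected lemma addRight (a : RD d) : IsTorusDiffeo (Equiv.addRight a) := by
  have hequi : EquivariantD (Equiv.addRight a) := fun z v => add_right_comm z (intVecD v) a
  have hdescend : descend (Equiv.addRight a) = (· + prD a) :=
    funext <| prD_surjective.forall.2 fun z => by rw [hequi.descend_prD]; rfl
  refine ⟨contDiff_id.add contDiff_const, ?_, hequi, ?_⟩
  · rw [Equiv.neg_addRight]
    exact contDiff_id.add contDiff_const
  · rw [hdescend]
    exact measurePreserving_add_right _ _

lemma exists_limit {F : ℕ → Perm (RD d)} (hF : ∀ n, IsTorusDiffeo (F n)) {u : ℕ → ℝ}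
    (hu : Summable u) (hclose : ∀ n, CkClose n (u n) (F (n + 1)) (F n))
    (hclose_inv : ∀ n, CkClose n (u n) ⇑(F (n + 1))⁻¹ ⇑(F n)⁻¹) :
    ∃ F' : Perm (RD d), IsTorusDiffeo F' ∧ TendstoUniformly (fun n => ⇑(F n)) F' atTop := by
  obtain ⟨f, hf, hlim⟩ :=
    exists_contDiff_tendstoUniformly (fun n => (hF n).contDiff) hu hclose
  obtain ⟨g, hg, hlim_inv⟩ :=
    exists_contDiff_tendstoUniformly (fun n => (hF n).contDiff_inv) hu hclose_inv
  have hgf : Function.LeftInverse g f := fun z => tendsto_nhds_unique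
    (hlim_inv.tendsto_comp hg.continuous.continuousAt (hlim.tendsto_at z))
    (by simp)
  have hfg : Function.RightInverse g f := fun z => tendsto_nhds_unique
    (hlim.tendsto_comp hf.continuous.continuousAt (hlim_inv.tendsto_at z))
    (by simp)
  have hequi : EquivariantD f := .of_tendsto (fun n => (hF n).equivariant) hlim.tendsto_at
  refine ⟨⟨f, g, hgf, hfg⟩, ⟨hf, hg, hequi, ?_⟩, hlim⟩
  refine measurePreserving_of_tendsto (fun n => (hF n).measurePreserving)
    (prD_surjective.forall.2 fun z => ?_)
  simp only [(hF _).equivariant.descend_prD, Equiv.coe_fn_mk, hequi.descend_prD]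
  exact (continuous_prD.tendsto _).comp (hlim.tendsto_at z)

end IsTorusDiffeo

/-- The conjugate by `H` of the translation by `a`. -/
def conjTranslation (H : Perm (RD d)) (a : RD d) : Perm (RD d) :=
  H * Equiv.addRight a * H⁻¹

lemma conjTranslation_apply (H : Perm (RD d)) (a z : RD d) :
    conjTranslation H a z = H (H⁻¹ z + a) := rfl

lemma conjTranslation_inv (H : Perm (RD d)) (a : RD d) :
    (conjTranslation H a)⁻¹ = conjTranslation H (-a) := by
  simp [conjTranslation, mul_assoc]

namespace IsTorusDiffeo

variable {H : Perm (RD d)}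

protected lemma conjTranslation (hH : IsTorusDiffeo H) (a : RD d) :
    IsTorusDiffeo (conjTranslation H a) :=
  (hH.mul (.addRight a)).mul hH.inv

lemma eventually_ckClose_conjTranslation (hH : IsTorusDiffeo H) (a₀ : RD d) (n : ℕ) {ε : ℝ}
    (hε : 0 < ε) :
    ∀ᶠ a in 𝓝 a₀, CkClose n ε (conjTranslation H a) (conjTranslation H a₀) := by
  let Ψ : RD d × RD d → RD d := fun p => H (H⁻¹ p.2 + p.1) - H (H⁻¹ p.2 + a₀)
  have hΨ : ContDiff ℝ (⊤ : ℕ∞) Ψ :=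
    (hH.contDiff.comp ((hH.contDiff_inv.comp contDiff_snd).add contDiff_fst)).sub
      (hH.contDiff.comp ((hH.contDiff_inv.comp contDiff_snd).add contDiff_const))
  have hperiodic : ∀ a z v, Ψ (a, z + intVecD v) = Ψ (a, z) := fun a z v => by
    simp only [Ψ, hH.equivariant.perm_inv z v, add_right_comm _ (intVecD v), hH.equivariant _ v,
      add_sub_add_right_eq_sub]
  have hzero : (fun z => Ψ (a₀, z)) = fun _ => 0 := funext fun z => sub_self _
  have hk : ∀ k ∈ Set.Iic n, ∀ᶠ a in 𝓝 a₀, ∀ z,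
      ‖iteratedFDeriv ℝ k (fun z => Ψ (a, z)) z‖ < ε := fun k _ =>
    eventually_forall_norm_lt_of_periodic (continuous_iteratedFDeriv_slice hΨ k)
      (fun a z v => by rw [← iteratedFDeriv_comp_add_right]; simp only [hperiodic])
      (fun z => by simp [hzero]) hε
  filter_upwards [(Set.finite_Iic n).eventually_all.2 hk] with a ha k hkn z
  exact (ha k hkn z).le

end IsTorusDiffeo

end TorusDiffeos

section Halving

variable {α : Type*} [PseudoMetricSpace α] {u : ℕ → α} {b : ℕ → ℝ}

lemma le_div_two_pow_of_le_half (hb : ∀ n, b (n + 1) ≤ b n / 2) (n k : ℕ) :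
    b (n + k) ≤ b n / 2 ^ k := by
  induction k with
  | zero => simp
  | succ k ih => calc
      b (n + k + 1) ≤ b (n + k) / 2 := hb _
      _ ≤ b n / 2 ^ k / 2 := by gcongr
      _ = b n / 2 ^ (k + 1) := by rw [div_div, pow_succ]

lemma cauchySeq_of_dist_le_of_le_half (hb : ∀ n, b (n + 1) ≤ b n / 2)
    (hu : ∀ n, dist (u n) (u (n + 1)) ≤ b n) : CauchySeq u :=
  cauchySeq_of_le_geometric_two (C := 2 * b 0) fun n => (hu n).trans <| by
    simpa using le_div_two_pow_of_le_half hb 0 n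

lemma dist_le_two_mul_of_tendsto_of_le_half (hb : ∀ n, b (n + 1) ≤ b n / 2)
    (hu : ∀ n, dist (u n) (u (n + 1)) ≤ b n) {l : α} (hl : Tendsto u atTop (𝓝 l)) (n : ℕ) :
    dist (u n) l ≤ 2 * b n :=
  dist_le_of_le_geometric_two_of_tendsto₀ (f := fun k => u (n + k)) (C := 2 * b n)
    (fun k => (hu (n + k)).trans <| by simpa using le_div_two_pow_of_le_half hb n k)
    (by simpa only [add_comm n] using (tendsto_add_atTop_iff_nat n).2 hl)

end Halving

section RationalApproximation

variable {d : ℕ}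

lemma nsmul_ne_zero_of_denseRange {G : Type*} [AddGroup G] [TopologicalSpace G] [T1Space G]
    [Infinite G] {w : G} (hw : DenseRange fun n : ℕ => n • w) {q : ℕ} (hq : 0 < q) :
    q • w ≠ 0 := fun h => by
  have hfin : (Set.range fun n : ℕ => n • w).Finite :=
    (isOfFinAddOrder_iff_nsmul_eq_zero.2 ⟨q, hq, h⟩).finite_multiples
  exact Set.infinite_univ (hw.closure_eq ▸ hfin.isClosed.closure_eq.symm ▸ hfin)

/-- The line spanned by `(1, K, K², …)` winds around the torus so as to be `1 / K`-dense. -/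
lemma exists_dist_prD_smul_pow_le {K : ℕ} (hK : 0 < K) (x : TD d) :
    ∃ t ∈ Set.Ico (0 : ℝ) 1, dist (prD (t • fun i : Fin d => (K : ℝ) ^ (i : ℕ))) x ≤ 1 / K := by
  have hK' : (0 : ℝ) < K := Nat.cast_pos.2 hK
  induction d with
  | zero => exact ⟨0, by simp, by simp [Subsingleton.elim _ x, dist_self]⟩
  | succ d ih =>
    obtain ⟨t, ⟨ht₀, ht₁⟩, ht⟩ := ih fun i => x i.succ
    obtain ⟨θ, ⟨hθ₀, hθ₁⟩, hθ⟩ := AddCircle.eq_coe_Ico (x 0)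
    have hn₀ := Nat.floor_le (mul_nonneg hK'.le hθ₀)
    have hn₁ := Nat.lt_floor_add_one (K * θ)
    have hnK : (⌊K * θ⌋₊ : ℝ) + 1 ≤ K := by
      exact_mod_cast (Nat.floor_lt (mul_nonneg hK'.le hθ₀)).2 (by nlinarith)
    refine ⟨(t + ⌊K * θ⌋₊) / K, ⟨by positivity, by rw [div_lt_one hK']; linarith⟩, ?_⟩
    refine (dist_pi_le_iff (by positivity)).2 (Fin.cases ?_ fun i => ?_)
    · rw [← hθ, dist_eq_norm, prD, ← AddCircle.coe_sub]
      refine (norm_coe_addCircle_le _).trans ?_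
      rw [show ((t + ⌊K * θ⌋₊) / K : ℝ) = θ + (t + ⌊K * θ⌋₊ - K * θ) / K by
        field_simp; ring]
      simp only [Pi.smul_apply, Fin.val_zero, pow_zero, smul_eq_mul, mul_one, add_sub_cancel_left]
      rw [abs_div, abs_of_pos hK']
      gcongr
      exact abs_le.2 ⟨by linarith, by linarith⟩
    · refine le_trans (le_of_eq ?_) ((dist_le_pi_dist _ _ i).trans ht)
      refine congrArg (dist · (x i.succ)) ((sub_eq_zero.1 ?_))
      rw [prD, prD, ← AddCircle.coe_sub, AddCircle.coe_eq_zero_iff]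
      refine ⟨⌊K * θ⌋₊ * K ^ (i : ℕ), ?_⟩
      simp only [Pi.smul_apply, smul_eq_mul, Fin.val_succ, pow_succ, zsmul_eq_mul]
      push_cast
      field_simp
      ring

lemma dist_prD_floor_smul_le {t : ℝ} (ht : 0 ≤ t) {m : ℕ} (hm : 0 < m) (k : RD d) :
    dist (prD ((⌊t * m⌋₊ / m : ℝ) • k)) (prD (t • k)) ≤ (m : ℝ)⁻¹ * ‖k‖ := by
  have hm' : (0 : ℝ) < m := Nat.cast_pos.2 hm
  rw [dist_eq_norm, ← prD_sub, ← sub_smul]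
  refine (norm_prD_le _).trans ?_
  rw [norm_smul]
  gcongr
  rw [show (⌊t * m⌋₊ / m : ℝ) - t = (⌊t * m⌋₊ - t * m) * (m : ℝ)⁻¹ by field_simp, norm_mul,
    norm_inv, Real.norm_natCast]
  refine mul_le_of_le_one_left (by positivity) (abs_le.2 ⟨?_, ?_⟩)
  · linarith [Nat.lt_floor_add_one (t * m)]
  · linarith [Nat.floor_le (mul_nonneg ht hm'.le)]

lemma nsmul_prD_add_inv_smul {a : RD d} {q m : ℕ} (hq : 0 < q) (ha : q • prD a = 0) (k : RD d)
    (l : ℕ) : (q * l) • prD (a + ((q : ℝ) * m)⁻¹ • k) = prD (((l : ℝ) / m) • k) := by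
  have hsplit : (q * l) • (a + ((q : ℝ) * m)⁻¹ • k) = (q * l) • a + ((l : ℝ) / m) • k := by
    rw [smul_add, ← Nat.cast_smul_eq_nsmul ℝ _ (_ • k), smul_smul]
    congr 2
    push_cast
    field_simp
  rw [← prD_nsmul, hsplit, prD_add, prD_nsmul, mul_comm q, mul_nsmul', ha, nsmul_zero, zero_add]

lemma exists_dense_rational_near {a : RD d} {q : ℕ} (hq : 0 < q) (ha : q • prD a = 0) {δ : ℝ}
    (hδ : 0 < δ) {S : Set (RD d)} (hS : S ∈ 𝓝 a) (M : ℕ) :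
    ∃ q' a', M ≤ q' ∧ q ≤ q' ∧ a' ∈ S ∧ q' • prD a' = 0 ∧
      ∀ x : TD d, ∃ m ≤ q', dist (m • prD a') x ≤ δ := by
  obtain ⟨K, hK⟩ := exists_nat_gt (2 / δ)
  have hK₀ : (0 : ℝ) < K := lt_trans (by positivity) hK
  have hKδ : 1 / (K : ℝ) ≤ δ / 2 := by
    rw [div_le_div_iff₀ hK₀ two_pos]
    linarith [(div_lt_iff₀ hδ).1 hK]
  let k : RD d := fun i => (K : ℝ) ^ (i : ℕ)
  have hnear : Tendsto (fun m : ℕ => a + (((q : ℝ) * m)⁻¹) • k) atTop (𝓝 a) := by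
    have h : Tendsto (fun m : ℕ => ((q : ℝ) * m)⁻¹) atTop (𝓝 0) := tendsto_inv_atTop_zero.comp
      (tendsto_natCast_atTop_atTop.const_mul_atTop (Nat.cast_pos.2 hq))
    simpa using (h.smul_const k).const_add a
  have hfine : Tendsto (fun m : ℕ => (m : ℝ)⁻¹ * ‖k‖) atTop (𝓝 0) := by
    simpa using (tendsto_inv_atTop_nhds_zero_nat (𝕜 := ℝ)).mul_const ‖k‖
  obtain ⟨m, hmS, hmk, hM⟩ := ((hnear.eventually hS).and
    ((hfine.eventually_le_const (half_pos hδ)).and (eventually_ge_atTop (M + 1)))).exists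
  have hm : (0 : ℝ) < m := Nat.cast_pos.2 (by lia)
  set a' : RD d := a + ((q : ℝ) * m)⁻¹ • k with ha'
  have hperiod : (q * m) • prD a' = 0 := by
    rw [ha', nsmul_prD_add_inv_smul hq ha, div_self hm.ne', one_smul, prD_eq_zero_iff]
    exact ⟨fun i => K ^ (i : ℕ), funext fun i => by simp [k, intVecD]⟩
  refine ⟨q * m, a', by nlinarith, Nat.le_mul_of_pos_right _ (by lia), hmS, hperiod, fun x => ?_⟩
  obtain ⟨t, ⟨ht₀, ht₁⟩, ht⟩ := exists_dist_prD_smul_pow_le (Nat.cast_pos.1 hK₀) x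
  have hfloor : ⌊t * m⌋₊ ≤ m := Nat.floor_le_of_le (by nlinarith)
  refine ⟨q * ⌊t * m⌋₊, by gcongr, ?_⟩
  have hround := dist_prD_floor_smul_le ht₀ (Nat.cast_pos.1 hm) k
  rw [ha', nsmul_prD_add_inv_smul hq ha]
  linarith [dist_triangle (prD ((⌊t * m⌋₊ / m : ℝ) • k)) (prD (t • k)) x]

/-- Rational vectors `a n` of denominator dividing `q n` whose translations have finer and finer
orbits, and which converge faster than exponentially in the denominators. -/
structure FastRationalApprox (a : ℕ → RD d) (q : ℕ → ℕ) : Prop where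
  pos (n : ℕ) : 0 < q n
  le_denom (n : ℕ) : n ≤ q n
  denom_le_succ (n : ℕ) : q n ≤ q (n + 1)
  nsmul_eq_zero (n : ℕ) : q n • prD (a n) = 0
  dist_le (n : ℕ) : dist (a n) (a (n + 1)) ≤ Real.exp (-((n + 1) * q n))
  exists_dist_le (n : ℕ) (x : TD d) : ∃ m ≤ q (n + 1), dist (m • prD (a (n + 1))) x ≤ (1 / 2) ^ n

namespace FastRationalApprox

variable {a : ℕ → RD d} {q : ℕ → ℕ} {ω : RD d}

lemma exp_succ_le_half (h : FastRationalApprox a q) (n : ℕ) :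
    Real.exp (-(((n + 1 : ℕ) + 1) * q (n + 1))) ≤ Real.exp (-((n + 1) * q n)) / 2 := by
  have hq : (1 : ℝ) ≤ q (n + 1) := Nat.one_le_cast.2 (h.pos (n + 1))
  have hqq : (q n : ℝ) ≤ q (n + 1) := Nat.cast_le.2 (h.denom_le_succ n)
  have htwo : (2 : ℝ) ≤ Real.exp 1 := by linarith [Real.add_one_le_exp (1 : ℝ)]
  calc Real.exp (-(((n + 1 : ℕ) + 1) * q (n + 1)))
      ≤ Real.exp (-((n + 1) * q n) - 1) := by
        gcongr
        push_cast
        nlinarith [mul_le_mul_of_nonneg_left hqq n.cast_nonneg]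
    _ ≤ Real.exp (-((n + 1) * q n)) / 2 := by
        rw [Real.exp_sub]
        gcongr

lemma exists_tendsto (h : FastRationalApprox a q) : ∃ ω, Tendsto a atTop (𝓝 ω) :=
  cauchySeq_tendsto_of_complete <| cauchySeq_of_dist_le_of_le_half h.exp_succ_le_half h.dist_le

lemma dist_limit_le (h : FastRationalApprox a q) (hω : Tendsto a atTop (𝓝 ω)) (n : ℕ) :
    dist (a n) ω ≤ 2 * Real.exp (-((n + 1) * q n)) := by
  simpa using dist_le_two_mul_of_tendsto_of_le_half h.exp_succ_le_half h.dist_le hω n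

lemma mul_dist_limit_le (h : FastRationalApprox a q) (hω : Tendsto a atTop (𝓝 ω)) (n : ℕ) :
    q n * dist (a n) ω ≤ Real.exp (-(n * q n)) := by
  have hexp : (q n : ℝ) * 2 ≤ Real.exp (q n) := by
    have htwo : (2 : ℝ) ≤ Real.exp 1 := by linarith [Real.add_one_le_exp (1 : ℝ)]
    have h := Real.add_one_le_exp ((q n : ℝ) - 1)
    rw [Real.exp_sub, le_div_iff₀ (Real.exp_pos 1)] at h
    nlinarith [(q n).cast_nonneg (α := ℝ)]
  calc q n * dist (a n) ω ≤ q n * (2 * Real.exp (-((n + 1) * q n))) := by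
        gcongr
        exact h.dist_limit_le hω n
    _ = q n * 2 * Real.exp (-((n + 1) * q n)) := by ring
    _ ≤ Real.exp (q n) * Real.exp (-((n + 1) * q n)) := by gcongr
    _ = Real.exp (-(n * q n)) := by rw [← Real.exp_add]; ring_nf

lemma dist_nsmul_limit_le (h : FastRationalApprox a q) (hω : Tendsto a atTop (𝓝 ω)) {n m : ℕ}
    (hm : m ≤ q n) : dist (m • prD (a n)) (m • prD ω) ≤ Real.exp (-(n * q n)) := by
  rw [dist_eq_norm, ← nsmul_sub, ← prD_sub]
  calc ‖m • prD (a n - ω)‖ ≤ m * ‖a n - ω‖ :=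
        norm_nsmul_le.trans (by gcongr; exact norm_prD_le _)
    _ ≤ q n * dist (a n) ω := by rw [dist_eq_norm]; gcongr
    _ ≤ _ := h.mul_dist_limit_le hω n

lemma denseRange_nsmul (h : FastRationalApprox a q) (hω : Tendsto a atTop (𝓝 ω)) :
    DenseRange fun m : ℕ => m • prD ω := by
  refine Metric.denseRange_iff.2 fun x r hr => ?_
  have hgeom : Tendsto (fun n : ℕ => (1 / 2 : ℝ) ^ n) atTop (𝓝 0) :=
    tendsto_pow_atTop_nhds_zero_of_lt_one (by norm_num) (by norm_num)
  have hexp : Tendsto (fun n : ℕ => Real.exp (-(n + 1 : ℕ))) atTop (𝓝 0) :=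
    Real.tendsto_exp_neg_atTop_nhds_zero.comp
      (tendsto_natCast_atTop_atTop.comp (tendsto_add_atTop_nat 1))
  obtain ⟨n, hn⟩ := ((hgeom.add hexp).eventually_lt_const (by simpa using hr)).exists
  obtain ⟨m, hm, hmx⟩ := h.exists_dist_le n x
  refine ⟨m, ?_⟩
  have hq : (1 : ℝ) ≤ q (n + 1) := Nat.one_le_cast.2 (h.pos (n + 1))
  calc dist x (m • prD ω)
      ≤ dist (m • prD (a (n + 1))) x + dist (m • prD (a (n + 1))) (m • prD ω) :=
        dist_triangle_left _ _ _
    _ ≤ (1 / 2) ^ n + Real.exp (-((n + 1 : ℕ) * q (n + 1))) :=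
        add_le_add hmx (h.dist_nsmul_limit_le hω hm)
    _ ≤ (1 / 2) ^ n + Real.exp (-(n + 1 : ℕ)) := by
        gcongr
        exact le_mul_of_one_le_right (by positivity) hq
    _ < r := hn

lemma superLiouvilleD [Nonempty (Fin d)] (h : FastRationalApprox a q)
    (hω : Tendsto a atTop (𝓝 ω)) : SuperLiouvilleD ω := fun M => by
  have : Infinite (AddCircle (1 : ℝ)) :=
    (AddCircle.equivIco 1 0).infinite_iff.2 (Set.Ico_infinite (by norm_num)).to_subtype
  obtain ⟨n, hn⟩ := exists_nat_gt (-M)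
  refine frequently_atTop.2 fun N => ⟨q (n + N), (Nat.le_add_left _ _).trans (h.le_denom _), ?_⟩
  have hq : (0 : ℝ) < q (n + N) := Nat.cast_pos.2 (h.pos _)
  have hpos : 0 < ‖q (n + N) • prD ω‖ :=
    norm_pos_iff.2 (nsmul_ne_zero_of_denseRange (h.denseRange_nsmul hω) (h.pos _))
  have hle := h.dist_nsmul_limit_le hω (le_refl (q (n + N)))
  rw [h.nsmul_eq_zero, dist_zero_left] at hle
  rw [normTD_eq_norm_prD, Nat.cast_smul_eq_nsmul, prD_nsmul, inv_mul_lt_iff₀ hq]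
  calc Real.log ‖q (n + N) • prD ω‖ ≤ -((n + N : ℕ) * q (n + N)) :=
        (Real.log_le_log hpos hle).trans_eq (Real.log_exp _)
    _ ≤ -(n * q (n + N)) := by gcongr; lia
    _ < q (n + N) * M := by nlinarith

end FastRationalApprox

end RationalApproximation

section Shear

open Equiv

variable {d : ℕ} {i j : Fin d}

/-- The shear `z ↦ z + φ (z j) e_i`. -/
def shear (h : j ≠ i) (φ : ℝ → ℝ) : Perm (RD d) where
  toFun z := z + Pi.single i (φ (z j))
  invFun z := z - Pi.single i (φ (z j))
  left_inv z := by simp [h]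
  right_inv z := by simp [h]

lemma shear_apply (h : j ≠ i) (φ : ℝ → ℝ) (z : RD d) :
    shear h φ z = z + Pi.single i (φ (z j)) := rfl

lemma shear_inv_apply (h : j ≠ i) (φ : ℝ → ℝ) (z : RD d) :
    (shear h φ)⁻¹ z = z - Pi.single i (φ (z j)) := rfl

lemma equivariantD_shear (h : j ≠ i) {φ : ℝ → ℝ} (hφ : Function.Periodic φ 1) :
    EquivariantD (shear h φ) := fun z v => by
  have hperiod : φ (z j + v j) = φ (z j) := by simpa using hφ.int_mul (v j) (z j)
  simp only [shear_apply, Pi.add_apply, intVecD, hperiod]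
  exact add_right_comm _ _ _

lemma measurePreserving_descend_shear (h : j ≠ i) {φ : ℝ → ℝ} (hφ : Function.Periodic φ 1)
    (hc : Continuous φ) : MeasurePreserving (descend (shear h φ)) volume volume := by
  obtain ⟨n, rfl⟩ : ∃ n, d = n + 1 := ⟨d - 1, by have := i.isLt; lia⟩
  obtain ⟨k, rfl⟩ := Fin.exists_succAbove_eq h
  have hlift : Continuous (hφ.lift : AddCircle (1 : ℝ) → ℝ) := continuous_coinduced_dom.2 hc
  have hdescend : descend (shear h φ) =
      fun x => x + Pi.single i ((hφ.lift (i.removeNth x k) : ℝ) : AddCircle (1 : ℝ)) := by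
    refine funext (prD_surjective.forall.2 fun z => ?_)
    rw [(equivariantD_shear h hφ).descend_prD]
    exact congrArg (prD z + ·) (prD_single _ _)
  rw [hdescend]
  exact measurePreserving_add_single i (φ := fun x => ((hφ.lift (x k) : ℝ) : AddCircle (1 : ℝ)))
    ((AddCircle.continuous_mk' 1).comp (hlift.comp (continuous_apply k))).measurable

lemma isTorusDiffeo_shear (h : j ≠ i) {φ : ℝ → ℝ} (hφ : Function.Periodic φ 1)
    (hs : ContDiff ℝ (⊤ : ℕ∞) φ) : IsTorusDiffeo (shear h φ) where
  contDiff := contDiff_id.add <| (ContinuousLinearMap.single ℝ (fun _ => ℝ) i).contDiff.comp <|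
    hs.comp (contDiff_apply ℝ ℝ j)
  contDiff_inv :=
    contDiff_id.sub <| (ContinuousLinearMap.single ℝ (fun _ => ℝ) i).contDiff.comp <|
      hs.comp (contDiff_apply ℝ ℝ j)
  equivariant := equivariantD_shear h hφ
  measurePreserving := measurePreserving_descend_shear h hφ hs.continuous

/-- A shear in the direction `e_j`, conjugated by a shear in the direction `e_i`. -/
def twist (hij : i ≠ j) (φ ψ : ℝ → ℝ) : Perm (RD d) :=
  (shear hij.symm φ)⁻¹ * shear hij ψ * shear hij.symm φ

variable (hij : i ≠ j) {φ ψ : ℝ → ℝ}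

lemma isTorusDiffeo_twist (hφ : Function.Periodic φ 1) (hφs : ContDiff ℝ (⊤ : ℕ∞) φ)
    (hψ : Function.Periodic ψ 1) (hψs : ContDiff ℝ (⊤ : ℕ∞) ψ) :
    IsTorusDiffeo (twist hij φ ψ) :=
  ((isTorusDiffeo_shear _ hφ hφs).inv.mul (isTorusDiffeo_shear _ hψ hψs)).mul
    (isTorusDiffeo_shear _ hφ hφs)

lemma twist_apply (z : RD d) :
    twist hij φ ψ z = z + Pi.single i (φ (z j) - φ (z j + ψ (z i + φ (z j)))) +
      Pi.single j (ψ (z i + φ (z j))) := by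
  simp only [twist, Perm.mul_apply, shear_apply, shear_inv_apply, Pi.add_apply,
    Pi.single_eq_same, Pi.single_eq_of_ne hij.symm, add_zero,
    Pi.single_sub]
  abel

lemma twist_eq_self {z : RD d} (hz : ψ (z i + φ (z j)) = 0) : twist hij φ ψ z = z := by
  simp [twist_apply, hz]

lemma twist_add {a : RD d} (hφ : Function.Periodic φ (a j)) (hψ : Function.Periodic ψ (a i))
    (z : RD d) : twist hij φ ψ (z + a) = twist hij φ ψ z + a := by
  simp only [twist_apply, Pi.add_apply, hφ _, add_right_comm _ (a _), hψ _]
  abel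

variable {η : ℝ}

lemma abs_twist_apply_sub_le (hφ : ∀ x, |φ x| ≤ η) (z : RD d) :
    |twist hij φ ψ z i - z i| ≤ 2 * η := by
  have hsub := abs_sub (φ (z j)) (φ (z j + ψ (z i + φ (z j))))
  simp only [twist_apply, Pi.add_apply, Pi.single_eq_same, Pi.single_eq_of_ne hij, add_zero,
    add_sub_cancel_left]
  linarith [hφ (z j), hφ (z j + ψ (z i + φ (z j)))]

lemma norm_twist_sub_le {t : ℝ} (hφ : ∀ x, |φ x| ≤ η) (hψ : ∀ x, |ψ x| ≤ t) (z : RD d) :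
    ‖twist hij φ ψ z - z‖ ≤ t + 2 * η := by
  have hsub := abs_sub (φ (z j)) (φ (z j + ψ (z i + φ (z j))))
  rw [twist_apply, add_assoc, add_sub_cancel_left]
  refine (norm_add_le _ _).trans ?_
  rw [Pi.norm_single, Pi.norm_single, Real.norm_eq_abs, Real.norm_eq_abs]
  linarith [hφ (z j), hφ (z j + ψ (z i + φ (z j))), hψ (z i + φ (z j))]

end Shear

section Bump

lemma sin_pi_mul_sub_round_sq (x : ℝ) :
    Real.sin (Real.pi * (x - round x)) ^ 2 = Real.sin (Real.pi * x) ^ 2 := by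
  rw [Real.sin_sq_eq_half_sub, Real.sin_sq_eq_half_sub,
    show 2 * (Real.pi * (x - round x)) = 2 * (Real.pi * x) - round x * (2 * Real.pi) by ring,
    Real.cos_sub_int_mul_two_pi]

lemma four_mul_norm_sq_le_sin_sq (x : ℝ) :
    4 * ‖(x : AddCircle (1 : ℝ))‖ ^ 2 ≤ Real.sin (Real.pi * x) ^ 2 := by
  have hround := abs_sub_round x
  have hpi := Real.pi_pos
  have hjordan := Real.mul_abs_le_abs_sin (x := Real.pi * (x - round x)) <| by
    rw [abs_mul, abs_of_pos hpi]
    nlinarith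
  rw [abs_mul, abs_of_pos hpi, ← mul_assoc, div_mul_cancel₀ _ hpi.ne'] at hjordan
  rw [UnitAddCircle.norm_eq, ← sin_pi_mul_sub_round_sq, ← sq_abs (Real.sin _)]
  calc 4 * |x - round x| ^ 2 = (2 * |x - round x|) ^ 2 := by ring
    _ ≤ _ := by gcongr

lemma sin_sq_le_ten_mul_norm_sq (x : ℝ) :
    Real.sin (Real.pi * x) ^ 2 ≤ 10 * ‖(x : AddCircle (1 : ℝ))‖ ^ 2 := by
  rw [UnitAddCircle.norm_eq, ← sin_pi_mul_sub_round_sq, sq_abs]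
  calc Real.sin (Real.pi * (x - round x)) ^ 2
      ≤ (Real.pi * (x - round x)) ^ 2 := sq_le_sq.2 Real.abs_sin_le_abs
    _ = Real.pi ^ 2 * (x - round x) ^ 2 := mul_pow _ _ _
    _ ≤ 10 * (x - round x) ^ 2 := by
        gcongr
        nlinarith [Real.pi_lt_d2, Real.pi_pos]

/-- The bump is a function of `sin² (π x)`, which is smooth, periodic and comparable to the squared
distance of `x` to the integers. -/
lemma exists_periodic_bump {s : ℝ} (hs : (s : AddCircle (1 : ℝ)) ≠ 0) :
    ∃ b : ℝ → ℝ, ContDiff ℝ (⊤ : ℕ∞) b ∧ Function.Periodic b 1 ∧ (∀ x, |b x| ≤ 1) ∧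
      b 0 = 0 ∧ b s = 1 ∧
      ∀ x : ℝ, 2 * ‖(s : AddCircle (1 : ℝ))‖ ≤ ‖(x : AddCircle (1 : ℝ))‖ → b x = 0 := by
  set c := Real.sin (Real.pi * s) ^ 2
  have hc : 0 < c :=
    lt_of_lt_of_le (by positivity [norm_pos_iff.2 hs]) (four_mul_norm_sq_le_sin_sq s)
  let χ : ContDiffBump c := ⟨c / 4, c / 2, by positivity, by linarith⟩
  have hzero {y : ℝ} (hy : c / 2 ≤ |y - c|) : χ y = 0 := χ.zero_of_le_dist hy
  refine ⟨fun x => χ (Real.sin (Real.pi * x) ^ 2), χ.contDiff.comp (by fun_prop), fun x => ?_,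
    fun x => ?_, hzero ?_, χ.one_of_mem_closedBall ?_, fun x hx => hzero ?_⟩
  · simp only [mul_add, mul_one, Real.sin_add_pi, neg_sq]
  · rw [abs_of_nonneg χ.nonneg]
    exact χ.le_one
  · simp [abs_of_pos hc, hc.le]
  · exact Metric.mem_closedBall_self χ.rIn_pos.le
  · refine le_trans ?_ (le_abs_self _)
    nlinarith [four_mul_norm_sq_le_sin_sq x, sin_sq_le_ten_mul_norm_sq s,
      pow_le_pow_left₀ (by positivity) hx 2]

end Bump

section Twist

open Equiv

variable {d : ℕ} {i j : Fin d}

/-- `A` is concentrated over `q` thin strips of total width of order `δ` transverse to the `i`-th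
coordinate, barely moves that coordinate, fixes `0` and moves `t e_j` to `t' e_j`. -/
structure IsTwist (i j : Fin d) (q : ℕ) (δ t t' : ℝ) (A : RD d → RD d) : Prop where
  abs_apply_sub_le (z : RD d) : |A z i - z i| ≤ 2 * δ / q
  norm_sub_le (z : RD d) : ‖A z - z‖ ≤ t + 2 * δ / q
  eq_self (z : RD d) : 3 * δ ≤ ‖q • prD z i‖ → A z = z
  map_zero : A 0 = 0
  map_single : A (Pi.single j t) = Pi.single j t'

lemma periodic_comp_natCast_mul {f : ℝ → ℝ} (hf : Function.Periodic f 1) {q : ℕ} {a : ℝ}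
    (ha : q • (a : AddCircle (1 : ℝ)) = 0) : Function.Periodic (fun x => f (q * x)) a := fun x => by
  rw [← AddCircle.coe_nsmul, AddCircle.coe_eq_zero_iff] at ha
  obtain ⟨k, hk⟩ := ha
  have hk' : q * a = k := by simpa using hk.symm
  simpa [mul_add, hk'] using hf.int_mul k (q * x)

lemma abs_mul_sin_le {c : ℝ} (hc : 0 ≤ c) (x : ℝ) : |c * Real.sin x| ≤ c := by
  rw [abs_mul, abs_of_nonneg hc]
  exact mul_le_of_le_one_right hc (Real.abs_sin_le_one x)

lemma coe_mul_sin_ne_zero {t δ : ℝ} (ht : Irrational t) (hδ : 0 < δ) (hδ' : δ < 1) {q : ℕ}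
    (hq : 0 < q) : ((δ * Real.sin (2 * Real.pi * (q * t)) : ℝ) : AddCircle (1 : ℝ)) ≠ 0 := by
  intro h
  obtain ⟨k, hk⟩ := (AddCircle.coe_eq_zero_iff 1).1 h
  rw [zsmul_one] at hk
  have hk₀ : k = 0 := by
    rw [← Int.abs_lt_one_iff, ← @Int.cast_lt ℝ, Int.cast_abs, hk, Int.cast_one]
    exact (abs_mul_sin_le hδ.le _).trans_lt hδ'
  rw [hk₀, Int.cast_zero, zero_eq_mul, or_iff_right hδ.ne', Real.sin_eq_zero_iff] at hk
  obtain ⟨l, hl⟩ := hk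
  refine (ht.natCast_mul (m := 2 * q) (by lia)).ne_int l ?_
  push_cast
  exact mul_left_cancel₀ Real.pi_ne_zero (by linarith)

lemma isTwist_twist (hij : i ≠ j) {q : ℕ} (hq : 0 < q) {t t' δ : ℝ} {φ b : ℝ → ℝ} (hφ₀ : φ 0 = 0)
    (hφ : ∀ x, |φ x| ≤ δ / q) (hφt : φ t' = φ t) (htt' : |t' - t| ≤ t) (hb₀ : b 0 = 0)
    (hb₁ : ∀ x, |b x| ≤ 1) (hbt : b (q * φ t) = 1)
    (hb : ∀ x : ℝ, 2 * δ ≤ ‖(x : AddCircle (1 : ℝ))‖ → b x = 0) :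
    IsTwist i j q δ t t' (twist hij φ fun x => (t' - t) * b (q * x)) where
  abs_apply_sub_le z := (abs_twist_apply_sub_le hij hφ z).trans_eq (mul_div_assoc _ _ _).symm
  norm_sub_le z := by
    rw [mul_div_assoc]
    refine norm_twist_sub_le hij hφ (fun x => ?_) z
    rw [abs_mul]
    exact (mul_le_of_le_one_right (abs_nonneg _) (hb₁ _)).trans htt'
  eq_self z hz := by
    refine twist_eq_self hij (mul_eq_zero_of_right _ (hb _ ?_))
    have hsplit : q • prD z i = ((q * (z i + φ (z j)) : ℝ) : AddCircle (1 : ℝ)) -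
        ((q * φ (z j) : ℝ) : AddCircle (1 : ℝ)) := by
      rw [← AddCircle.coe_sub, mul_add, add_sub_cancel_right, prD, ← AddCircle.coe_nsmul,
        nsmul_eq_mul]
    have hsmall : ‖((q * φ (z j) : ℝ) : AddCircle (1 : ℝ))‖ ≤ δ := by
      refine (norm_coe_addCircle_le _).trans ?_
      rw [abs_mul, Nat.abs_cast]
      exact (le_div_iff₀' (Nat.cast_pos.2 hq)).1 (hφ _)
    rw [hsplit] at hz
    linarith [hz.trans (norm_sub_le _ _)]
  map_zero := twist_eq_self hij (by simp [hφ₀, hb₀])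
  map_single := by simp [twist_apply, hij, hbt, hφt, ← Pi.single_add]

lemma exists_twist (hij : i ≠ j) {q : ℕ} (hq : 0 < q) {t : ℝ} (ht : Irrational t) (ht₀ : 0 < t)
    {δ : ℝ} (hδ : 0 < δ) (hδ' : δ < 1) :
    ∃ A : Perm (RD d), IsTorusDiffeo A ∧ IsTwist i j q δ t (Int.fract (q * t) / q) A ∧
      ∀ a, q • prD a = 0 → ∀ z, A (z + a) = A z + a := by
  have hq₀ : (0 : ℝ) < q := Nat.cast_pos.2 hq
  obtain ⟨b, hbs, hbp, hb₁, hb₀, hbt, hb⟩ :=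
    exists_periodic_bump (coe_mul_sin_ne_zero ht hδ hδ' hq)
  set t' := Int.fract (q * t) / q
  have htt' : t' - t = -(⌊q * t⌋ / q) := by
    simp only [t', Int.fract]
    field_simp
    ring
  let φ : ℝ → ℝ := fun x => δ / q * Real.sin (2 * Real.pi * (q * x))
  let ψ : ℝ → ℝ := fun x => (t' - t) * b (q * x)
  have hφp {a : ℝ} (ha : q • (a : AddCircle (1 : ℝ)) = 0) : Function.Periodic φ a :=
    periodic_comp_natCast_mul (f := fun x => δ / q * Real.sin (2 * Real.pi * x))
      (fun x => by simp [mul_add]) ha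
  have hψp {a : ℝ} (ha : q • (a : AddCircle (1 : ℝ)) = 0) : Function.Periodic ψ a :=
    periodic_comp_natCast_mul (f := fun x => (t' - t) * b x) (fun x => by simp [hbp x]) ha
  have hone : q • ((1 : ℝ) : AddCircle (1 : ℝ)) = 0 := by simp [AddCircle.coe_period]
  refine ⟨twist hij φ ψ, isTorusDiffeo_twist hij (hφp hone) (by fun_prop) (hψp hone) (by fun_prop),
    isTwist_twist hij hq (by simp [φ]) (fun x => abs_mul_sin_le (by positivity) _) ?_ ?_ hb₀ hb₁ ?_
      fun x hx => hb x (le_trans ?_ hx),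
    fun a ha => twist_add hij (hφp (congrFun ha j)) (hψp (congrFun ha i))⟩
  · have hperiod : q • ((t' - t : ℝ) : AddCircle (1 : ℝ)) = 0 := by
      rw [htt', ← AddCircle.coe_nsmul, AddCircle.coe_eq_zero_iff]
      exact ⟨-⌊q * t⌋, by simp [mul_div_cancel₀ _ hq₀.ne']⟩
    simpa using hφp hperiod t
  · rw [htt', abs_neg, abs_of_nonneg (by positivity), div_le_iff₀' hq₀]
    exact Int.floor_le _
  · rwa [← mul_assoc, mul_div_cancel₀ _ hq₀.ne']
  · gcongr
    exact (norm_coe_addCircle_le _).trans (abs_mul_sin_le hδ.le _)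

end Twist

section Tower

open Equiv

variable {d : ℕ}

/-- The points of the torus whose `i`-th coordinate is within `ε / q` of a multiple of `1 / q`. -/
def strips (i : Fin d) (q : ℕ) (ε : ℝ) : Set (TD d) := {x | ‖q • x i‖ ≤ ε}

lemma volume_strips_le (i : Fin d) {q : ℕ} (hq : 1 < q) (ε : ℝ) :
    volume (strips i q ε) ≤ ENNReal.ofReal (2 * ε) := by
  have : IsProbabilityMeasure (volume : Measure (AddCircle (1 : ℝ))) :=
    ⟨by simp [AddCircle.measure_univ]⟩
  have hpres : MeasurePreserving (fun x : TD d => q • x i) volume volume :=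
    (AddCircle.ergodic_nsmul hq).toMeasurePreserving.comp
      (measurePreserving_eval (fun _ : Fin d => (volume : Measure (AddCircle (1 : ℝ)))) i)
  calc volume (strips i q ε)
      = volume ((fun x : TD d => q • x i) ⁻¹' Metric.closedBall 0 ε) := by
        congr 1
        ext x
        simp [strips]
    _ = volume (Metric.closedBall (0 : AddCircle (1 : ℝ)) ε) :=
        hpres.measure_preimage Metric.isClosed_closedBall.measurableSet.nullMeasurableSet
    _ ≤ _ := by
        rw [AddCircle.volume_closedBall]
        exact ENNReal.ofReal_le_ofReal (min_le_right _ _)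

/-- The width of the strips supporting the `n`-th twist of the construction. -/
def twistWidth (n : ℕ) : ℝ := (1 / 2) ^ (n + 3)

lemma twistWidth_pos (n : ℕ) : 0 < twistWidth n := by
  unfold twistWidth
  positivity

lemma twistWidth_lt_one (n : ℕ) : twistWidth n < 1 :=
  pow_lt_one₀ (by norm_num) (by norm_num) (by lia)

lemma twistWidth_succ (n : ℕ) : twistWidth (n + 1) = twistWidth n / 2 := by
  simp only [twistWidth, pow_succ]
  ring

lemma summable_twistWidth : Summable twistWidth :=
  (summable_nat_add_iff 3).2 summable_geometric_two

/-- The conjugacies `H n` of the Anosov–Katok construction: `(H (n + 1))⁻¹` is obtained from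
`(H n)⁻¹` by applying a twist, and the twists shrink the segment `[0, t n e_j]` to a point. -/
structure TwistTower (i j : Fin d) (H : ℕ → Perm (RD d)) (q : ℕ → ℕ) (t : ℕ → ℝ) : Prop where
  zero : H 0 = 1
  isTorusDiffeo (n : ℕ) : IsTorusDiffeo (H n)
  one_lt (n : ℕ) : 1 < q (n + 1)
  le_succ (n : ℕ) : q n ≤ q (n + 1)
  irrational : Irrational (t 0)
  abs_le_half_pow (n : ℕ) : |t n| ≤ (1 / 2) ^ n
  isTwist (n : ℕ) :
    IsTwist i j (q (n + 1)) (twistWidth n) (t n) (t (n + 1)) ⇑((H (n + 1))⁻¹ * H n)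

namespace TwistTower

variable {i j : Fin d} {H : ℕ → Perm (RD d)} {q : ℕ → ℕ} {t : ℕ → ℝ}

lemma inv_succ_apply (H : ℕ → Perm (RD d)) (n : ℕ) (z : RD d) :
    (H (n + 1))⁻¹ z = ((H (n + 1))⁻¹ * H n) ((H n)⁻¹ z) := by simp

lemma dist_inv_succ_le (h : TwistTower i j H q t) (n : ℕ) (z : RD d) :
    dist ((H n)⁻¹ z) ((H (n + 1))⁻¹ z) ≤ 2 * (1 / 2) ^ n := by
  have hq : (1 : ℝ) ≤ q (n + 1) := Nat.one_le_cast.2 (h.one_lt n).le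
  have hw := twistWidth_pos n
  rw [dist_comm, dist_eq_norm, inv_succ_apply]
  calc _ ≤ t n + 2 * twistWidth n / q (n + 1) := (h.isTwist n).norm_sub_le _
    _ ≤ (1 / 2) ^ n + 2 * twistWidth n := by
        gcongr
        exacts [(le_abs_self _).trans (h.abs_le_half_pow n), div_le_self (by positivity) hq]
    _ ≤ 2 * (1 / 2) ^ n := by
        have : (0 : ℝ) < (1 / 2) ^ n := by positivity
        rw [twistWidth, pow_add]
        linarith

lemma exists_limit (h : TwistTower i j H q t) :
    ∃ P : RD d → RD d, TendstoUniformly (fun n => ⇑(H n)⁻¹) P atTop := by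
  have hhalf : ∀ n : ℕ, (2 * (1 / 2) ^ (n + 1) : ℝ) ≤ 2 * (1 / 2) ^ n / 2 := fun n => by
    rw [pow_succ]
    linarith
  choose P hP using fun z => cauchySeq_tendsto_of_complete <|
    cauchySeq_of_dist_le_of_le_half hhalf fun n => h.dist_inv_succ_le n z
  have hzero : Tendsto (fun n : ℕ => (2 * (2 * (1 / 2) ^ n) : ℝ)) atTop (𝓝 0) := by
    simpa using ((tendsto_pow_atTop_nhds_zero_of_lt_one (r := (1 / 2 : ℝ)) (by norm_num)
      (by norm_num)).const_mul 2).const_mul 2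
  refine ⟨P, Metric.tendstoUniformly_iff.2 fun ε hε => ?_⟩
  filter_upwards [hzero.eventually_lt_const hε] with n hn z
  rw [dist_comm]
  exact (dist_le_two_mul_of_tendsto_of_le_half hhalf (fun n => h.dist_inv_succ_le n z) (hP z)
    n).trans_lt hn

variable {P : RD d → RD d}

lemma limit_zero_eq_limit_single (h : TwistTower i j H q t)
    (hP : TendstoUniformly (fun n => ⇑(H n)⁻¹) P atTop) : P 0 = P (Pi.single j (t 0)) := by
  have hmap : ∀ n, (H n)⁻¹ 0 = 0 ∧ (H n)⁻¹ (Pi.single j (t 0)) = Pi.single j (t n) := fun n => by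
    induction n with
    | zero => simp [h.zero]
    | succ n ih =>
      rw [inv_succ_apply, inv_succ_apply, ih.1, ih.2]
      exact ⟨(h.isTwist n).map_zero, (h.isTwist n).map_single⟩
  have ht : Tendsto t atTop (𝓝 0) := squeeze_zero_norm h.abs_le_half_pow
    (tendsto_pow_atTop_nhds_zero_of_lt_one (by norm_num) (by norm_num))
  have hzero : Tendsto (fun n => (H n)⁻¹ 0) atTop (𝓝 0) := by
    simp only [(hmap _).1, tendsto_const_nhds]
  have hsingle : Tendsto (fun n => (H n)⁻¹ (Pi.single j (t 0))) atTop (𝓝 0) := by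
    simpa only [(hmap _).2, Function.comp_def, Pi.single_zero] using
      ((continuous_single (A := fun _ : Fin d => ℝ) j).tendsto 0).comp ht
  rw [tendsto_nhds_unique (hP.tendsto_at 0) hzero, tendsto_nhds_unique (hP.tendsto_at _) hsingle]

lemma prD_zero_ne_prD_single (h : TwistTower i j H q t) :
    prD (0 : RD d) ≠ prD (Pi.single j (t 0)) := fun heq => by
  have hj := congrFun heq j
  simp only [prD, Pi.zero_apply, Pi.single_eq_same, AddCircle.coe_zero] at hj
  obtain ⟨m, hm⟩ := (AddCircle.coe_eq_zero_iff 1).1 hj.symm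
  exact h.irrational.ne_int m (by simpa using hm.symm)

lemma dist_inv_apply_limit_le (h : TwistTower i j H q t)
    (hP : TendstoUniformly (fun n => ⇑(H n)⁻¹) P atTop) (n : ℕ) (z : RD d) :
    dist ((H n)⁻¹ z i) (P z i) ≤ 4 * twistWidth n / q (n + 1) := by
  have hhalf : ∀ n, 2 * twistWidth (n + 1) / q (n + 1 + 1) ≤ 2 * twistWidth n / q (n + 1) / 2 :=
    fun n => by
      have hq : (q (n + 1) : ℝ) ≤ q (n + 1 + 1) := Nat.cast_le.2 (h.le_succ _)
      have hq₀ : (0 : ℝ) < q (n + 1) := Nat.cast_pos.2 (zero_lt_one.trans (h.one_lt n))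
      have hw := twistWidth_pos n
      rw [twistWidth_succ, div_right_comm, mul_div_assoc']
      gcongr
  have hstep : ∀ n, dist ((H n)⁻¹ z i) ((H (n + 1))⁻¹ z i) ≤ 2 * twistWidth n / q (n + 1) :=
    fun n => by
      rw [dist_comm, inv_succ_apply]
      exact (h.isTwist n).abs_apply_sub_le _
  refine (dist_le_two_mul_of_tendsto_of_le_half hhalf hstep
    (tendsto_pi_nhds.1 (hP.tendsto_at z) i) n).trans_eq ?_
  ring

/-- The limit and the `n`-th conjugacy have almost the same `i`-th coordinate, so outside slightly
larger strips the limit detects that the remaining twists act trivially. -/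
lemma inv_succ_apply_eq (h : TwistTower i j H q t)
    (hP : TendstoUniformly (fun n => ⇑(H n)⁻¹) P atTop) {n : ℕ} {z : RD d}
    (hz : prD (P z) ∉ strips i (q (n + 1)) (7 * twistWidth n)) :
    (H (n + 1))⁻¹ z = (H n)⁻¹ z := by
  have hclose : ‖q (n + 1) • prD (P z) i - q (n + 1) • prD ((H n)⁻¹ z) i‖ ≤ 4 * twistWidth n := by
    have hq : (0 : ℝ) < q (n + 1) := Nat.cast_pos.2 (zero_lt_one.trans (h.one_lt n))
    rw [← smul_sub, ← Pi.sub_apply, ← prD_sub]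
    calc _ ≤ q (n + 1) * |P z i - (H n)⁻¹ z i| :=
          norm_nsmul_le.trans (by gcongr; exact norm_coe_addCircle_le _)
      _ ≤ 4 * twistWidth n := by
          rw [← le_div_iff₀' hq, ← Real.dist_eq, dist_comm]
          exact h.dist_inv_apply_limit_le hP n z
  have hz' : 7 * twistWidth n < ‖q (n + 1) • prD (P z) i‖ := not_le.1 hz
  rw [inv_succ_apply]
  refine (h.isTwist n).eq_self _ ?_
  linarith [norm_sub_norm_le (q (n + 1) • prD (P z) i) (q (n + 1) • prD ((H n)⁻¹ z) i)]

lemma limit_eq_inv_apply (hP : TendstoUniformly (fun n => ⇑(H n)⁻¹) P atTop) {N : ℕ} {z : RD d}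
    (hstep : ∀ n ≥ N, (H n)⁻¹ z = (H N)⁻¹ z → (H (n + 1))⁻¹ z = (H n)⁻¹ z) :
    P z = (H N)⁻¹ z := by
  have hconst : ∀ n ≥ N, (H n)⁻¹ z = (H N)⁻¹ z := fun n hn => by
    induction n, hn using Nat.le_induction with
    | base => rfl
    | succ n hn ih => exact (hstep n hn ih).trans ih
  exact tendsto_nhds_unique (hP.tendsto_at z)
    (tendsto_const_nhds.congr' <| (eventually_ge_atTop N).mono fun n hn => (hconst n hn).symm)

lemma equivariant_limit (h : TwistTower i j H q t)
    (hP : TendstoUniformly (fun n => ⇑(H n)⁻¹) P atTop) : EquivariantD P :=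
  .of_tendsto (fun n => (h.isTorusDiffeo n).inv.equivariant) hP.tendsto_at

lemma continuous_limit (h : TwistTower i j H q t)
    (hP : TendstoUniformly (fun n => ⇑(H n)⁻¹) P atTop) : Continuous P :=
  hP.continuous (.of_forall fun n => (h.isTorusDiffeo n).contDiff_inv.continuous)

lemma descend_limit_prD_zero (h : TwistTower i j H q t)
    (hP : TendstoUniformly (fun n => ⇑(H n)⁻¹) P atTop) :
    descend P (prD 0) = descend P (prD (Pi.single j (t 0))) := by
  simp only [(h.equivariant_limit hP).descend_prD, h.limit_zero_eq_limit_single hP]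

lemma mem_injectivityPoints (h : TwistTower i j H q t)
    (hP : TendstoUniformly (fun n => ⇑(H n)⁻¹) P atTop) {z : RD d} {N : ℕ}
    (hz : ∀ n ≥ N, prD ((H N)⁻¹ z) ∉ strips i (q (n + 1)) (7 * twistWidth n)) :
    prD z ∈ injectivityPoints (descend P) := by
  have hPe := h.equivariant_limit hP
  have hPz : P z = (H N)⁻¹ z := limit_eq_inv_apply hP fun n hn hzn => by
    have hstrip : 7 * twistWidth n < ‖q (n + 1) • prD ((H N)⁻¹ z) i‖ := not_le.1 (hz n hn)
    rw [inv_succ_apply]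
    refine (h.isTwist n).eq_self _ ?_
    rw [hzn]
    linarith [twistWidth_pos n]
  refine prD_surjective.forall.2 fun y hy => ?_
  rw [hPe.descend_prD, hPe.descend_prD, hPz] at hy
  have hPy : P y = (H N)⁻¹ y := limit_eq_inv_apply hP fun n hn _ =>
    h.inv_succ_apply_eq hP (hy ▸ hz n hn)
  rw [hPy] at hy
  obtain ⟨v, hv⟩ := prD_eq_prD_iff.1 hy
  rw [← (h.isTorusDiffeo N).equivariant.perm_inv] at hv
  exact prD_eq_prD_iff.2 ⟨v, (H N)⁻¹.injective hv⟩

lemma volume_compl_injectivityPoints_le (h : TwistTower i j H q t)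
    (hP : TendstoUniformly (fun n => ⇑(H n)⁻¹) P atTop) (N : ℕ) :
    volume (injectivityPoints (descend P))ᶜ ≤
      ∑' n, ENNReal.ofReal (14 * twistWidth (n + N)) := by
  have hH := (h.isTorusDiffeo N).inv
  have hsub : (injectivityPoints (descend P))ᶜ ⊆ descend ⇑(H N)⁻¹ ⁻¹'
      ⋃ n, strips i (q (n + N + 1)) (7 * twistWidth (n + N)) := by
    refine Set.compl_subset_comm.1 (prD_surjective.forall.2 fun z hz => ?_)
    refine h.mem_injectivityPoints hP (N := N) fun n hn hmem => hz ?_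
    rw [Set.mem_preimage, hH.equivariant.descend_prD]
    exact Set.mem_iUnion.2 ⟨n - N, by rwa [Nat.sub_add_cancel hn]⟩
  calc _ ≤ volume (⋃ n, strips i (q (n + N + 1)) (7 * twistWidth (n + N))) :=
        (measure_mono hsub).trans (hH.measurePreserving.measure_preimage_le _)
    _ ≤ _ := (measure_iUnion_le _).trans <| ENNReal.tsum_le_tsum fun n =>
        (volume_strips_le i (h.one_lt _) _).trans_eq (by ring_nf)

lemma dense_injectivityPoints (h : TwistTower i j H q t)
    (hP : TendstoUniformly (fun n => ⇑(H n)⁻¹) P atTop) :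
    Dense (injectivityPoints (descend P)) := by
  have htail := ENNReal.tendsto_sum_nat_add (fun n => ENNReal.ofReal (14 * twistWidth n))
    (summable_twistWidth.mul_left 14).tsum_ofReal_ne_top
  have hnull : volume (injectivityPoints (descend P))ᶜ = 0 :=
    le_antisymm (ge_of_tendsto' htail (h.volume_compl_injectivityPoints_le hP)) zero_le
  exact Measure.dense_of_ae (mem_ae_iff.2 hnull)

lemma semiconj_limit (h : TwistTower i j H q t)
    (hP : TendstoUniformly (fun n => ⇑(H n)⁻¹) P atTop) {F : RD d → RD d} {a : ℕ → RD d}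
    {ω : RD d} (hF : TendstoUniformly (fun n => ⇑(conjTranslation (H n) (a n))) F atTop)
    (ha : Tendsto a atTop (𝓝 ω)) : Function.Semiconj P F (· + ω) := fun z => by
  refine tendsto_nhds_unique
    (hP.tendsto_comp (h.continuous_limit hP).continuousAt (hF.tendsto_at z)) ?_
  simpa [conjTranslation_apply] using (hP.tendsto_at z).add ha

end TwistTower

end Tower

section Construction

open Equiv

variable {d : ℕ} {i j : Fin d}

lemma conjTranslation_mul_inv {H A : Perm (RD d)} {a : RD d} (hA : ∀ z, A (z + a) = A z + a) :
    conjTranslation (H * A⁻¹) a = conjTranslation H a := by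
  ext1 z
  simp [conjTranslation_apply, ← hA]

/-- The data reached after finitely many steps of the Anosov–Katok construction: the current
diffeomorphism is the conjugate by `H` of the translation by the rational vector `a`, of
denominator `q`, and the limit of `H⁻¹` is to identify `0` with the point mapped to `t e_j`. -/
structure Stage (d : ℕ) where
  H : Perm (RD d)
  a : RD d
  q : ℕ
  t : ℝ
  isTorusDiffeo : IsTorusDiffeo H
  pos : 0 < q
  nsmul_eq_zero : q • prD a = 0
  irrational : Irrational t
  t_pos : 0 < t

namespace Stage

/-- The diffeomorphism approximating the final one at a given stage. -/
def map (s : Stage d) : Perm (RD d) := conjTranslation s.H s.a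

/-- The stage of the identity map, from which the construction starts. -/
def initial (d : ℕ) : Stage d where
  H := 1
  a := 0
  q := 1
  t := √2 - 1
  isTorusDiffeo := .one
  pos := one_pos
  nsmul_eq_zero := by rw [prD_zero, nsmul_zero]
  irrational := by simpa using irrational_sqrt_two.sub_intCast 1
  t_pos := sub_pos.2 Real.one_lt_sqrt_two

lemma initial_t_le_one : (initial d).t ≤ 1 := by
  rw [initial, sub_le_iff_le_add, Real.sqrt_le_iff]
  norm_num

/-- `s'` may follow `s` at step `n` of the construction in the plane of the coordinates
`i` and `j`. -/
structure Next (i j : Fin d) (n : ℕ) (s s' : Stage d) : Prop where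
  two_pow_le : 2 ^ (n + 1) ≤ s'.q
  le : s.q ≤ s'.q
  dist_le : dist s.a s'.a ≤ Real.exp (-((n + 1) * s.q))
  exists_dist_le (x : TD d) : ∃ m ≤ s'.q, dist (m • prD s'.a) x ≤ (1 / 2) ^ n
  t_le : s'.t ≤ (1 / 2) ^ (n + 1)
  isTwist : IsTwist i j s'.q (twistWidth n) s.t s'.t ⇑(s'.H⁻¹ * s.H)
  ckClose : CkClose n ((1 / 2) ^ n) s'.map s.map
  ckClose_inv : CkClose n ((1 / 2) ^ n) ⇑s'.map⁻¹ ⇑s.map⁻¹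

lemma exists_rational_perturbation (s : Stage d) (n : ℕ) :
    ∃ q' a', 2 ^ (n + 1) ≤ q' ∧ s.q ≤ q' ∧ q' • prD a' = 0 ∧
      (∀ x : TD d, ∃ m ≤ q', dist (m • prD a') x ≤ (1 / 2) ^ n) ∧
      dist s.a a' ≤ Real.exp (-((n + 1) * s.q)) ∧
      CkClose n ((1 / 2) ^ n) (conjTranslation s.H a') s.map ∧
      CkClose n ((1 / 2) ^ n) ⇑(conjTranslation s.H a')⁻¹ ⇑s.map⁻¹ := by
  have hε : (0 : ℝ) < (1 / 2) ^ n := by positivity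
  have hclose := s.isTorusDiffeo.eventually_ckClose_conjTranslation s.a n hε
  have hclose_inv := (continuous_neg.tendsto s.a).eventually
    (s.isTorusDiffeo.eventually_ckClose_conjTranslation (-s.a) n hε)
  have hdist : ∀ᶠ a' in 𝓝 s.a, dist s.a a' ≤ Real.exp (-((n + 1) * s.q)) := by
    filter_upwards [Metric.closedBall_mem_nhds s.a (Real.exp_pos _)] with a' ha'
    rwa [dist_comm]
  obtain ⟨q', a', hM, hqq', ⟨hdist, hclose, hclose_inv⟩, ha', hdense⟩ :=
    exists_dense_rational_near s.pos s.nsmul_eq_zero hε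
      (hdist.and (hclose.and hclose_inv)) (2 ^ (n + 1))
  refine ⟨q', a', hM, hqq', ha', hdense, hdist, hclose, ?_⟩
  rwa [map, conjTranslation_inv, conjTranslation_inv]

lemma exists_next (hij : i ≠ j) (n : ℕ) (s : Stage d) : ∃ s', Next i j n s s' := by
  obtain ⟨q, a, hM, hq, ha, hdense, hdist, hclose, hclose_inv⟩ := s.exists_rational_perturbation n
  have hq₀ : 0 < q := s.pos.trans_le hq
  obtain ⟨A, hA, htwist, hcomm⟩ :=
    exists_twist hij hq₀ s.irrational s.t_pos (twistWidth_pos n) (twistWidth_lt_one n)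
  have hirr : Irrational (Int.fract (q * s.t)) := (s.irrational.natCast_mul hq₀.ne').sub_intCast _
  have hpos : 0 < Int.fract (q * s.t) := (Int.fract_nonneg _).lt_of_ne hirr.ne_zero.symm
  let s' : Stage d :=
    { H := s.H * A⁻¹
      a, q
      t := Int.fract (q * s.t) / q
      isTorusDiffeo := s.isTorusDiffeo.mul hA.inv
      pos := hq₀
      nsmul_eq_zero := ha
      irrational := hirr.div_natCast hq₀.ne'
      t_pos := div_pos hpos (Nat.cast_pos.2 hq₀) }
  have hmap : s'.map = conjTranslation s.H a := conjTranslation_mul_inv (hcomm a ha)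
  exact ⟨s',
    { two_pow_le := hM
      le := hq
      dist_le := hdist
      exists_dist_le := hdense
      t_le := by
        rw [one_div_pow]
        exact div_le_div₀ zero_le_one (Int.fract_lt_one _).le (by positivity) (mod_cast hM)
      isTwist := by simpa [s'] using htwist
      ckClose := hmap ▸ hclose
      ckClose_inv := hmap ▸ hclose_inv }⟩

end Stage

lemma exists_anosovKatok_sequence (hij : i ≠ j) :
    ∃ (H : ℕ → Perm (RD d)) (q : ℕ → ℕ) (a : ℕ → RD d) (t : ℕ → ℝ),
      FastRationalApprox a q ∧ TwistTower i j H q t ∧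
      (∀ n, CkClose n ((1 / 2) ^ n) (conjTranslation (H (n + 1)) (a (n + 1)))
        (conjTranslation (H n) (a n))) ∧
      ∀ n, CkClose n ((1 / 2) ^ n) ⇑(conjTranslation (H (n + 1)) (a (n + 1)))⁻¹
        ⇑(conjTranslation (H n) (a n))⁻¹ := by
  choose next hnext using Stage.exists_next (d := d) hij
  let s : ℕ → Stage d := Nat.rec (.initial d) next
  have hs : ∀ n, (s n).Next i j n (s (n + 1)) := fun n => hnext n (s n)
  refine ⟨fun n => (s n).H, fun n => (s n).q, fun n => (s n).a, fun n => (s n).t,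
    { pos n := (s n).pos
      le_denom
        | 0 => zero_le
        | n + 1 => Nat.lt_two_pow_self.le.trans (hs n).two_pow_le
      denom_le_succ n := (hs n).le
      nsmul_eq_zero n := (s n).nsmul_eq_zero
      dist_le n := (hs n).dist_le
      exists_dist_le n := (hs n).exists_dist_le },
    { zero := rfl
      isTorusDiffeo n := (s n).isTorusDiffeo
      one_lt n := (Nat.one_lt_two_pow n.succ_ne_zero).trans_le (hs n).two_pow_le
      le_succ n := (hs n).le
      irrational := (s 0).irrational
      abs_le_half_pow n := ?_
      isTwist n := (hs n).isTwist },
    fun n => (hs n).ckClose, fun n => (hs n).ckClose_inv⟩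
  rw [abs_of_pos (s n).t_pos]
  cases n with
  | zero => exact Stage.initial_t_le_one.trans_eq (pow_zero _).symm
  | succ n => exact (hs n).t_le

end Construction

/-- **Theorem 1.6.** For any d ≥ 2 there is a C^∞ area-preserving minimal diffeomorphism of
𝕋^d, semi-conjugate to a translation via a continuous surjection homotopic to the identity,
which is not topologically conjugate to any translation; moreover it can be chosen to be a
pseudo-rotation with super-Liouvillean rotation vector. -/
theorem negative_answer_to_Norton_Sullivan
    (d : ℕ) (hd : 2 ≤ d) :
    ∃ (f : TD d → TD d) (F : RD d → RD d) (ω : RD d),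
      IsHomeomorph f ∧
      (∃ G : RD d → RD d, Function.LeftInverse G F ∧ Function.RightInverse G F ∧
        ContDiff ℝ (⊤ : ℕ∞) F ∧ ContDiff ℝ (⊤ : ℕ∞) G) ∧
      IsLiftD F f ∧ EquivariantD F ∧
      MeasurePreserving f (volume : Measure (TD d)) volume ∧
      (∀ x : TD d, Dense (Set.range fun n : ℕ => f^[n] x)) ∧
      (∃ (w : TD d) (h : TD d → TD d), Continuous h ∧ Function.Surjective h ∧
        (∃ H : RD d → RD d, Continuous H ∧ IsLiftD H h ∧ EquivariantD H) ∧
        ∀ x : TD d, h (f x) = h x + w) ∧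
      (¬ ∃ (w : TD d) (h : TD d → TD d), IsHomeomorph h ∧ ∀ x : TD d, h (f x) = h x + w) ∧
      (∀ z : RD d, Tendsto (fun n : ℕ => (n : ℝ)⁻¹ • (F^[n] z - z)) atTop (𝓝 ω)) ∧
      SuperLiouvilleD ω := by
  obtain ⟨e, rfl⟩ := Nat.exists_eq_add_of_le' hd
  obtain ⟨H, q, a, t, hfast, htower, hclose, hclose_inv⟩ :=
    exists_anosovKatok_sequence (Fin.zero_ne_one (n := e))
  obtain ⟨ω, hω⟩ := hfast.exists_tendsto
  obtain ⟨P, hP⟩ := htower.exists_limit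
  obtain ⟨F, hF, hlim⟩ := IsTorusDiffeo.exists_limit
    (fun n => (htower.isTorusDiffeo n).conjTranslation (a n)) summable_geometric_two
    hclose hclose_inv
  have hsemi := htower.semiconj_limit hP hlim hω
  have hPc := htower.continuous_limit hP
  have hPe := htower.equivariant_limit hP
  obtain ⟨C, hC⟩ := hPe.exists_norm_sub_le hPc
  have hc := hPe.continuous_descend hPc
  have hs := hPe.semiconj_descend hF.equivariant hsemi
  have hw := hfast.denseRange_nsmul hω
  have hinj := htower.dense_injectivityPoints hP
  exact ⟨descend F, F, ω, hF.isHomeomorph_descend,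
    ⟨⇑F⁻¹, F.left_inv, F.right_inv, hF.contDiff, hF.contDiff_inv⟩,
    hF.equivariant.isLiftD_descend, hF.equivariant, hF.measurePreserving,
    dense_range_iterate_of_dense_injectivityPoints hc hs hw hinj,
    ⟨prD ω, descend P, hc, surjective_of_semiconj_add hc hs hw,
      ⟨P, hPc, hPe.isLiftD_descend, hPe⟩, hs⟩,
    fun ⟨_, _, hk, hku⟩ => not_isHomeomorph_of_semiconj_add hc hs hw hinj
      htower.prD_zero_ne_prD_single (htower.descend_limit_prD_zero hP) hku hk,
    tendsto_inv_smul_iterate_sub hC hsemi, hfast.superLiouvilleD hω⟩
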